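/- (Theorem 14, second claim.) For s > 0, let 𝒩_{AR}(s) be the number of conjugacy classes of PSL₂(ℤ) consisting of primitive hyperbolic elements γ with translation length ℓ(γ) = 2·arcosh(|tr γ|/2) ≤ s that are reciprocal (γ conjugate in PSL₂(ℤ) to γ⁻¹) and contain an element ambiguous of the first kind or an element ambiguous of the second kind. Then, as s → +∞, 𝒩_{AR}(s) = (3/(8π)) s e^{s/4} + O(e^{s/4}). -/

import Mathlib

open Matrix
open scoped MatrixGroups

instance : Fact (Even (Fintype.card (Fin 2))) := ⟨⟨1, rfl⟩⟩

/-- The determinant `-1` integer matrix `W = [[1, 0], [0, -1]]`. -/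
noncomputable def Wmat : Matrix (Fin 2) (Fin 2) ℤ := !![1, 0; 0, -1]

/-- The determinant `-1` integer matrix `W₁ = [[1, 0], [1, -1]]`. -/
noncomputable def W1mat : Matrix (Fin 2) (Fin 2) ℤ := !![1, 0; 1, -1]

/-- A lift `A ∈ SL₂(ℤ)` is ambiguous of the first kind if `W·A·W⁻¹ = ±A⁻¹`. -/
def Amb1 (A : SL(2, ℤ)) : Prop :=
  Wmat * (A : Matrix (Fin 2) (Fin 2) ℤ) * Wmat⁻¹ = ((A⁻¹ : SL(2, ℤ)) : Matrix (Fin 2) (Fin 2) ℤ) ∨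
  Wmat * (A : Matrix (Fin 2) (Fin 2) ℤ) * Wmat⁻¹ = -((A⁻¹ : SL(2, ℤ)) : Matrix (Fin 2) (Fin 2) ℤ)

/-- A lift `A ∈ SL₂(ℤ)` is ambiguous of the second kind if `W₁·A·W₁⁻¹ = ±A⁻¹`. -/
def Amb2 (A : SL(2, ℤ)) : Prop :=
  W1mat * (A : Matrix (Fin 2) (Fin 2) ℤ) * W1mat⁻¹ = ((A⁻¹ : SL(2, ℤ)) : Matrix (Fin 2) (Fin 2) ℤ) ∨
  W1mat * (A : Matrix (Fin 2) (Fin 2) ℤ) * W1mat⁻¹ = -((A⁻¹ : SL(2, ℤ)) : Matrix (Fin 2) (Fin 2) ℤ)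

/-- The subgroup `{±1}` of `SL₂(ℤ)`. -/
def pmOne : Subgroup SL(2, ℤ) := Subgroup.zpowers (-1)

instance : pmOne.Normal := by
  constructor
  intro x hx g
  obtain ⟨n, rfl⟩ := Subgroup.mem_zpowers_iff.mp hx
  have hc : Commute g (-1 : SL(2, ℤ)) := by
    show g * (-1) = (-1) * g
    apply Subtype.ext
    show ((g * (-1) : SL(2, ℤ)) : Matrix (Fin 2) (Fin 2) ℤ)
        = (((-1) * g : SL(2, ℤ)) : Matrix (Fin 2) (Fin 2) ℤ)
    simp
  have hcn : Commute g ((-1 : SL(2, ℤ)) ^ n) := hc.zpow_right n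
  have : g * (-1 : SL(2, ℤ)) ^ n * g⁻¹ = (-1) ^ n := by
    rw [hcn.eq, mul_assoc, mul_inv_cancel, mul_one]
  rw [this]
  exact Subgroup.zpow_mem _ (Subgroup.mem_zpowers _) n

/-- `PSL₂(ℤ) = SL₂(ℤ)/{±1}`. -/
abbrev PSL2Z := SL(2, ℤ) ⧸ pmOne

/-- An element of `PSL₂(ℤ)` is hyperbolic if the absolute value of the trace of a lift
to `SL₂(ℤ)` is greater than `2`. -/
def IsHyp (γ : PSL2Z) : Prop :=
  ∃ A : SL(2, ℤ), (QuotientGroup.mk A : PSL2Z) = γ ∧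
    2 < |Matrix.trace (A : Matrix (Fin 2) (Fin 2) ℤ)|

/-- An element of `PSL₂(ℤ)` is primitive if it is not a proper power. -/
def IsPrim (γ : PSL2Z) : Prop := ¬ ∃ (δ : PSL2Z) (n : ℕ), 2 ≤ n ∧ δ ^ n = γ

/-- An element of `PSL₂(ℤ)` is ambiguous of the first kind if it has a lift which is. -/
def AmbFst (γ : PSL2Z) : Prop :=
  ∃ A : SL(2, ℤ), (QuotientGroup.mk A : PSL2Z) = γ ∧ Amb1 A

/-- An element of `PSL₂(ℤ)` is ambiguous of the second kind if it has a lift which is. -/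
def AmbSnd (γ : PSL2Z) : Prop :=
  ∃ A : SL(2, ℤ), (QuotientGroup.mk A : PSL2Z) = γ ∧ Amb2 A

/-- The inverse hyperbolic cosine. -/
noncomputable def arcosh (x : ℝ) : ℝ := Real.log (x + Real.sqrt (x ^ 2 - 1))

/-- The translation length `ℓ(γ) = 2 arcosh(|tr γ|/2)` of `γ ∈ PSL₂(ℤ)` is at most `s`. -/
def TransLenLE (γ : PSL2Z) (s : ℝ) : Prop :=
  ∃ A : SL(2, ℤ), (QuotientGroup.mk A : PSL2Z) = γ ∧
    2 * arcosh (((|Matrix.trace (A : Matrix (Fin 2) (Fin 2) ℤ)| : ℤ) : ℝ) / 2) ≤ s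

/-- The number of conjugacy classes of primitive hyperbolic reciprocal elements of
`PSL₂(ℤ)` with translation length at most `s` containing an element ambiguous of the
first or of the second kind. -/
noncomputable def NAmbRec (s : ℝ) : ℕ :=
  {C : ConjClasses PSL2Z | ∃ γ : PSL2Z, ConjClasses.mk γ = C ∧
      IsPrim γ ∧ IsHyp γ ∧ TransLenLE γ s ∧ IsConj γ γ⁻¹ ∧
      ∃ δ : PSL2Z, IsConj γ δ ∧ (AmbFst δ ∨ AmbSnd δ)}.ncard


noncomputable def gAR (a b : ℕ) : ℝ := 1 / ((a:ℝ)^2 + (b:ℝ)^2)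

theorem gAR_comm (a b : ℕ) : gAR a b = gAR b a := by unfold gAR; rw [add_comm]

theorem row_int (N : ℕ) (hN : 0 < N) :
    ∑ i ∈ Finset.range N, gAR N (i+1) ≤ Real.pi / 4 / N ∧
    Real.pi / 4 / N ≤ ∑ i ∈ Finset.range N, gAR N i := by
  have hN' : (0:ℝ) < N := by exact_mod_cast hN
  have key : ∀ i : ℕ, gAR N (i+1) ≤ (Real.arctan ((i+1:ℕ)/N) - Real.arctan ((i:ℕ)/N)) / N ∧
      (Real.arctan ((i+1:ℕ)/N) - Real.arctan ((i:ℕ)/N)) / N ≤ gAR N i := by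
    intro i
    have hlt : ((i:ℕ):ℝ)/N < ((i+1:ℕ):ℝ)/N := by
      apply div_lt_div_of_pos_right _ hN'; push_cast; linarith
    obtain ⟨c, hc, hc2⟩ := exists_deriv_eq_slope Real.arctan hlt
      (Real.continuous_arctan.continuousOn) (Real.differentiable_arctan.differentiableOn)
    rw [Real.deriv_arctan] at hc2
    beta_reduce at hc2
    have hd : ((i+1:ℕ):ℝ)/N - (i:ℕ)/N = 1/N := by push_cast; ring
    rw [hd] at hc2
    have h1 : (Real.arctan ((i+1:ℕ)/N) - Real.arctan ((i:ℕ)/N)) / N = 1 / (N^2 + (N*c)^2) := by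
      have : (Real.arctan ((i+1:ℕ)/N) - Real.arctan ((i:ℕ)/N)) = 1/(1+c^2) / N := by
        rw [hc2]; field_simp
      rw [this]; field_simp
    have hc0 : 0 ≤ c := le_trans (by positivity) hc.1.le
    have hA : (i:ℝ) ≤ N * c := by
      have := hc.1.le; rw [div_le_iff₀ hN'] at this; linarith
    have hB : N * c ≤ ((i+1:ℕ):ℝ) := by
      have := hc.2.le; rw [le_div_iff₀ hN'] at this; linarith
    rw [h1]; unfold gAR
    constructor
    · apply one_div_le_one_div_of_le (by positivity)
      gcongr
    · apply one_div_le_one_div_of_le (by positivity)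
      gcongr
  have tel : ∑ i ∈ Finset.range N, (Real.arctan ((i+1:ℕ)/N) - Real.arctan ((i:ℕ)/N)) / N
      = Real.pi / 4 / N := by
    rw [← Finset.sum_div, Finset.sum_range_sub (fun i : ℕ => Real.arctan ((i:ℕ)/(N:ℝ)))]
    simp [hN'.ne']
  rw [← tel]
  exact ⟨Finset.sum_le_sum fun i _ => (key i).1, Finset.sum_le_sum fun i _ => (key i).2⟩

noncomputable def fAR (n : ℕ) : ℝ := ∑ a ∈ Finset.Icc 1 n, ∑ b ∈ Finset.range (n+1), gAR a b

theorem fAR_succ (n : ℕ) : fAR (n+1) = fAR n + 2 * ∑ i ∈ Finset.range (n+1), gAR (n+1) i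
    + 1/(2*((n+1:ℕ):ℝ)^2) - 1/((n+1:ℕ):ℝ)^2 := by
  unfold fAR
  rw [Finset.sum_Icc_succ_top (by omega), Finset.sum_range_succ]
  have : ∀ a ∈ Finset.Icc 1 n, ∑ b ∈ Finset.range (n+1+1), gAR a b
    = ∑ b ∈ Finset.range (n+1), gAR a b + gAR a (n+1) := fun a _ => Finset.sum_range_succ _ _
  rw [Finset.sum_congr rfl this, Finset.sum_add_distrib]
  have h2 : ∑ i ∈ Finset.range (n+1), gAR (n+1) i = gAR (n+1) 0 + ∑ a ∈ Finset.Icc 1 n, gAR a (n+1) := by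
    rw [Finset.sum_range_succ', add_comm, Finset.range_eq_Ico, Finset.sum_Ico_add' (fun i => gAR (n+1) i) 0 n 1]
    congr 1
    apply Finset.sum_congr
    · ext i; simp only [Finset.mem_Ico, Finset.mem_Icc]; omega
    · intros; rw [gAR_comm]
  have h3 : gAR (n+1) (n+1) = 1/(2*((n+1:ℕ):ℝ)^2) := by unfold gAR; ring_nf
  have h4 : gAR (n+1) 0 = 1/((n+1:ℕ):ℝ)^2 := by unfold gAR; simp
  rw [h3, ← h4]; linarith

theorem fAR_harm (n : ℕ) (hn : 1 ≤ n) : |fAR n - Real.pi/2 * (harmonic n : ℝ)| ≤ 3 - 1/n := by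
  induction n, hn using Nat.le_induction with
  | base =>
    have : fAR 1 = 3/2 := by unfold fAR gAR; simp [Finset.sum_range_succ]; norm_num
    rw [this]; simp [harmonic]
    rw [abs_le]; constructor <;> nlinarith [Real.pi_gt_three, Real.pi_lt_four]
  | succ n hn ih =>
    have hn' : (0:ℝ) < n := by exact_mod_cast hn
    obtain ⟨h1, h2⟩ := row_int (n+1) (by omega)
    have h3 : ∑ i ∈ Finset.range (n+1), gAR (n+1) (i+1) = ∑ i ∈ Finset.range (n+1), gAR (n+1) i
        + 1/(2*((n+1:ℕ):ℝ)^2) - 1/((n+1:ℕ):ℝ)^2 := by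
      have e1 := Finset.sum_range_succ (fun i => gAR (n+1) i) (n+1)
      have e2 := Finset.sum_range_succ' (fun i => gAR (n+1) i) (n+1)
      have h3 : gAR (n+1) (n+1) = 1/(2*((n+1:ℕ):ℝ)^2) := by unfold gAR; ring_nf
      have h4 : gAR (n+1) 0 = 1/((n+1:ℕ):ℝ)^2 := by unfold gAR; simp
      rw [h3] at e1; rw [h4] at e2; linarith
    rw [fAR_succ, harmonic_succ]
    set R := ∑ i ∈ Finset.range (n+1), gAR (n+1) i
    have e5 : (1:ℝ)/(2*((n+1:ℕ):ℝ)^2) = (1/((n+1:ℕ):ℝ)^2)/2 := by field_simp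
    have e6 : (1:ℝ)/((n+1:ℕ):ℝ)^2 ≤ 1/n - 1/((n+1:ℕ):ℝ) := by
      rw [div_sub_div _ _ hn'.ne' (by positivity), div_le_div_iff₀ (by positivity) (by positivity)]
      push_cast; nlinarith
    have e7 : 0 ≤ (1:ℝ)/((n+1:ℕ):ℝ)^2 := by positivity
    rw [abs_le] at ih ⊢
    have e8 : Real.pi / 2 * ((harmonic n + (↑(n+1))⁻¹ : ℚ) : ℝ) = Real.pi/2 * (harmonic n : ℝ) + 2 * (Real.pi/4/((n+1:ℕ):ℝ)) := by
      push_cast; field_simp; ring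
    rw [e8]
    rw [e5] at h3 ⊢
    constructor <;> linarith [ih.1, ih.2]

theorem fAR_log (n : ℕ) (hn : 1 ≤ n) : |fAR n - Real.pi/2 * Real.log n| ≤ 5 := by
  have h := fAR_harm n hn
  have hn' : (0:ℝ) < n := by exact_mod_cast hn
  have h1 := log_add_one_le_harmonic n
  have h2 := harmonic_le_one_add_log n
  have h3 : Real.log n ≤ Real.log (n+1:ℕ) := Real.log_le_log hn' (by push_cast; linarith)
  have h4 : (0:ℝ) ≤ 1/n := by positivity
  rw [abs_le] at *
  constructor <;> nlinarith [Real.pi_gt_three, Real.pi_lt_four]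

noncomputable def SpAR (n : ℕ) : ℝ :=
  ∑ p ∈ (Finset.Icc 1 n ×ˢ Finset.range (n+1)).filter (fun p => Nat.gcd p.1 p.2 = 1), gAR p.1 p.2

theorem fAR_eq (n : ℕ) : fAR n = ∑ d ∈ Finset.Icc 1 n, SpAR (n/d) / (d:ℝ)^2 := by
  unfold fAR
  rw [← Finset.sum_product']
  rw [← Finset.sum_fiberwise_of_maps_to (t := Finset.Icc 1 n) (g := fun p => Nat.gcd p.1 p.2)]
  · apply Finset.sum_congr rfl
    intro d hd
    rw [Finset.mem_Icc] at hd
    have hd0 : 0 < d := hd.1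
    unfold SpAR
    rw [Finset.sum_div]
    apply Finset.sum_nbij' (i := fun p => (p.1/d, p.2/d)) (j := fun q => (d*q.1, d*q.2))
    · rintro ⟨a, b⟩ h
      simp only [Finset.mem_filter, Finset.mem_product, Finset.mem_Icc, Finset.mem_range] at h ⊢
      obtain ⟨⟨⟨h1, h2⟩, h3⟩, h4⟩ := h
      have hda : d ∣ a := h4 ▸ Nat.gcd_dvd_left a b
      refine ⟨⟨⟨?_, Nat.div_le_div_right h2⟩, ?_⟩, ?_⟩
      · exact Nat.div_pos (Nat.le_of_dvd h1 hda) hd0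
      · exact Nat.lt_succ_of_le (Nat.div_le_div_right (by omega))
      · have := Nat.coprime_div_gcd_div_gcd (m := a) (n := b) (by omega)
        rw [h4] at this
        exact this
    · rintro ⟨a, b⟩ h
      simp only [Finset.mem_filter, Finset.mem_product, Finset.mem_Icc, Finset.mem_range] at h ⊢
      obtain ⟨⟨⟨h1, h2⟩, h3⟩, h4⟩ := h
      refine ⟨⟨⟨Nat.mul_pos hd0 h1, ?_⟩, ?_⟩, ?_⟩
      · rw [mul_comm]; exact (Nat.le_div_iff_mul_le hd0).1 h2
      · rw [mul_comm]; exact Nat.lt_succ_of_le ((Nat.le_div_iff_mul_le hd0).1 (by omega))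
      · rw [Nat.gcd_mul_left, h4, mul_one]
    · rintro ⟨a, b⟩ h
      simp only [Finset.mem_filter] at h
      have hda : d ∣ a := h.2 ▸ Nat.gcd_dvd_left a b
      have hdb : d ∣ b := h.2 ▸ Nat.gcd_dvd_right a b
      simp [Nat.mul_div_cancel' hda, Nat.mul_div_cancel' hdb]
    · rintro ⟨a, b⟩ h
      simp [hd0]
    · rintro ⟨a, b⟩ h
      simp only [Finset.mem_filter] at h
      have hda : d ∣ a := h.2 ▸ Nat.gcd_dvd_left a b
      have hdb : d ∣ b := h.2 ▸ Nat.gcd_dvd_right a b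
      obtain ⟨a', rfl⟩ := hda
      obtain ⟨b', rfl⟩ := hdb
      simp only [Nat.mul_div_cancel_left _ hd0]
      unfold gAR
      push_cast
      rw [div_div]; congr 1; ring
  · rintro ⟨a, b⟩ h
    simp only [Finset.mem_product, Finset.mem_Icc, Finset.mem_range] at h ⊢
    exact ⟨Nat.gcd_pos_of_pos_left _ h.1.1, le_trans (Nat.gcd_le_left _ h.1.1) h.1.2⟩

theorem sum_inv_sq_le (n : ℕ) : ∑ d ∈ Finset.Icc 1 n, 1/(d:ℝ)^2 ≤ Real.pi^2/6 := by
  exact sum_le_hasSum _ (fun i _ => by positivity) hasSum_zeta_two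

theorem sum_inv_sq_ge (n : ℕ) (hn : 1 ≤ n) :
    Real.pi^2/6 - (1:ℝ)/(n:ℝ) ≤ ∑ d ∈ Finset.Icc 1 n, 1/(d:ℝ)^2 := by
  have h1 : ∀ m ≥ n, ∑ d ∈ Finset.range (m+1), 1/(d:ℝ)^2
      ≤ ∑ d ∈ Finset.Icc 1 n, 1/(d:ℝ)^2 + (1:ℝ)/(n:ℝ) - (1:ℝ)/(m:ℝ) := by
    intro m hm
    induction m, hm using Nat.le_induction with
    | base =>
      rw [Finset.sum_range_succ', Finset.range_eq_Ico, Finset.sum_Ico_add' (fun d : ℕ => 1/(d:ℝ)^2) 0 n 1]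
      have : Finset.Ico (0+1) (n+1) = Finset.Icc 1 n := by
        ext i; simp only [Finset.mem_Ico, Finset.mem_Icc]; omega
      rw [this]; simp
    | succ m hm ih =>
      rw [Finset.sum_range_succ]
      have hm' : (0:ℝ) < m := by exact_mod_cast (by omega : 0 < m)
      have e6 : (1:ℝ)/((m+1:ℕ):ℝ)^2 ≤ 1/m - 1/((m+1:ℕ):ℝ) := by
        rw [div_sub_div _ _ hm'.ne' (by positivity), div_le_div_iff₀ (by positivity) (by positivity)]
        push_cast; nlinarith
      linarith
  have h2 := (hasSum_zeta_two.tendsto_sum_nat).comp (Filter.tendsto_add_atTop_nat 1)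
  have h3 : Real.pi^2/6 ≤ ∑ d ∈ Finset.Icc 1 n, 1/(d:ℝ)^2 + 1/n := by
    apply le_of_tendsto h2
    filter_upwards [Filter.eventually_ge_atTop n] with m hm
    have := h1 m hm
    have h0 : (0:ℝ) ≤ 1/m := by positivity
    simp only [Function.comp]
    linarith
  linarith

theorem sum_log_sq : ∃ C : ℝ, ∀ n : ℕ, ∑ d ∈ Finset.Icc 1 n, Real.log d/(d:ℝ)^2 ≤ C := by
  have hs : Summable (fun n : ℕ => 2 * (1 / (n:ℝ)^((3:ℝ)/2))) :=
    (Real.summable_one_div_nat_rpow.2 (by norm_num)).mul_left 2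
  refine ⟨∑' n : ℕ, 2 * (1 / (n:ℝ)^((3:ℝ)/2)), fun n => ?_⟩
  refine le_trans (Finset.sum_le_sum ?_) (hs.sum_le_tsum (Finset.Icc 1 n) (fun i _ => by positivity))
  intro d hd
  have hd0 : (0:ℝ) < d := by exact_mod_cast (Finset.mem_Icc.1 hd).1
  have h1 : Real.log d ≤ 2 * (d:ℝ)^((1:ℝ)/2) := by
    have := Real.log_le_rpow_div hd0.le (ε := 1/2) (by norm_num)
    linarith
  have h2 : (d:ℝ)^2 = (d:ℝ)^((1:ℝ)/2) * (d:ℝ)^((3:ℝ)/2) := by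
    rw [← Real.rpow_add hd0]; norm_num
  rw [h2, mul_one_div, div_le_div_iff₀ (by positivity) (by positivity)]
  have : 0 < (d:ℝ)^((3:ℝ)/2) := by positivity
  nlinarith

theorem log_div_bd (n d : ℕ) (hd : 1 ≤ d) (hdn : d ≤ n) :
    Real.log (n/d : ℕ) ≤ Real.log n - Real.log d ∧ Real.log n - Real.log d ≤ Real.log (n/d:ℕ) + 1 := by
  have hd0 : (0:ℝ) < d := by exact_mod_cast hd
  have hn0 : (0:ℝ) < n := by exact_mod_cast (by omega : 0 < n)
  have hq : 1 ≤ n/d := Nat.div_pos hdn hd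
  have hq0 : (0:ℝ) < (n/d:ℕ) := by exact_mod_cast hq
  rw [← Real.log_div hn0.ne' hd0.ne']
  constructor
  · exact Real.log_le_log hq0 Nat.cast_div_le
  · have h1 : (n:ℝ)/d ≤ 2 * (n/d:ℕ) := by
      rw [div_le_iff₀ hd0]
      have : n ≤ 2 * (n/d) * d := by
        have := Nat.lt_div_mul_add (a := n) hd
        nlinarith
      exact_mod_cast this
    have h2 := Real.log_le_log (by positivity) h1
    rw [Real.log_mul (by norm_num) hq0.ne'] at h2
    have := Real.log_two_lt_d9
    linarith

theorem main_sum : ∃ C : ℝ, ∀ n : ℕ, 1 ≤ n →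
    |∑ d ∈ Finset.Icc 1 n, (3/Real.pi * Real.log (n/d:ℕ))/(d:ℝ)^2 - Real.pi/2*Real.log n| ≤ C := by
  obtain ⟨C1, hC1⟩ := sum_log_sq
  refine ⟨C1 + 5, fun n hn => ?_⟩
  have hn0 : (0:ℝ) < n := by exact_mod_cast hn
  have hpi := Real.pi_gt_three
  have hpi4 : Real.pi^2/6 < 2 := by nlinarith [Real.pi_lt_d2]
  have hL : 0 ≤ Real.log n := Real.log_natCast_nonneg n
  have hL2 : Real.log n * (1/n) ≤ 1 := by
    rw [mul_one_div, div_le_one hn0]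
    exact (Real.log_le_sub_one_of_pos hn0).trans (by linarith)
  have s1 := sum_inv_sq_le n
  have s2 := sum_inv_sq_ge n hn
  have s3 := hC1 n
  have s4 : 0 ≤ ∑ d ∈ Finset.Icc 1 n, Real.log d/(d:ℝ)^2 :=
    Finset.sum_nonneg fun i _ => div_nonneg (Real.log_natCast_nonneg i) (by positivity)
  have u1 : ∑ d ∈ Finset.Icc 1 n, Real.log (n/d:ℕ)/(d:ℝ)^2 ≤
      ∑ d ∈ Finset.Icc 1 n, (Real.log n * (1/(d:ℝ)^2) - Real.log d/(d:ℝ)^2) := by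
    apply Finset.sum_le_sum
    intro d hd
    rw [Finset.mem_Icc] at hd
    have := (log_div_bd n d hd.1 hd.2).1
    rw [mul_one_div, ← sub_div]
    gcongr
  have u2 : ∑ d ∈ Finset.Icc 1 n, (Real.log n * (1/(d:ℝ)^2) - Real.log d/(d:ℝ)^2) ≤
      ∑ d ∈ Finset.Icc 1 n, (Real.log (n/d:ℕ)/(d:ℝ)^2 + 1/(d:ℝ)^2) := by
    apply Finset.sum_le_sum
    intro d hd
    rw [Finset.mem_Icc] at hd
    have := (log_div_bd n d hd.1 hd.2).2
    rw [mul_one_div, ← sub_div, ← add_div]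
    gcongr
  rw [Finset.sum_sub_distrib, ← Finset.mul_sum] at u1 u2
  rw [Finset.sum_add_distrib] at u2
  set Z := ∑ d ∈ Finset.Icc 1 n, 1/(d:ℝ)^2
  set Y := ∑ d ∈ Finset.Icc 1 n, Real.log d/(d:ℝ)^2
  have e1 : ∑ d ∈ Finset.Icc 1 n, (3/Real.pi * Real.log (n/d:ℕ))/(d:ℝ)^2 =
    3/Real.pi * ∑ d ∈ Finset.Icc 1 n, Real.log (n/d:ℕ)/(d:ℝ)^2 := by
    rw [Finset.mul_sum]; exact Finset.sum_congr rfl fun i _ => by ring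
  rw [e1]
  set V := ∑ d ∈ Finset.Icc 1 n, Real.log (n/d:ℕ)/(d:ℝ)^2
  have e2 : Real.pi/2*Real.log n = 3/Real.pi * (Real.pi^2/6 * Real.log n) := by field_simp; ring
  rw [e2, ← mul_sub, abs_mul, abs_of_pos (by positivity : 0 < 3/Real.pi)]
  have c1 : 3/Real.pi ≤ 1 := by rw [div_le_one (by positivity)]; linarith
  have key : |V - Real.pi^2/6*Real.log n| ≤ C1 + 5 := by
    rw [abs_le]; constructor <;> nlinarith
  calc 3/Real.pi * |V - Real.pi^2/6*Real.log n| ≤ 1 * |V - Real.pi^2/6*Real.log n| := by gcongr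
    _ ≤ _ := by linarith

theorem SpAR_log : ∃ C : ℝ, 0 ≤ C ∧ ∀ n : ℕ, 1 ≤ n → |SpAR n - 3/Real.pi * Real.log n| ≤ C := by
  obtain ⟨C1, hC1⟩ := main_sum
  have hC1' : 0 ≤ C1 := le_trans (abs_nonneg _) (hC1 1 le_rfl)
  refine ⟨4 * (C1 + 5), by linarith, fun n => ?_⟩
  induction n using Nat.strong_induction_on with
  | _ n ih =>
    intro hn
    have h1 := fAR_eq n
    have h2 := fAR_log n hn
    have h3 := hC1 n hn
    have h4 : ∑ d ∈ Finset.Icc 1 n, SpAR (n/d) / (d:ℝ)^2 =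
        ∑ d ∈ Finset.Icc 1 n, (3/Real.pi * Real.log (n/d:ℕ))/(d:ℝ)^2 +
        ∑ d ∈ Finset.Icc 1 n, (SpAR (n/d) - 3/Real.pi * Real.log (n/d:ℕ))/(d:ℝ)^2 := by
      rw [← Finset.sum_add_distrib]; exact Finset.sum_congr rfl fun i _ => by ring
    have hI : Finset.Icc 1 n = insert 1 (Finset.Icc 2 n) := by
      ext i; simp only [Finset.mem_insert, Finset.mem_Icc]; omega
    have h5 : ∑ d ∈ Finset.Icc 1 n, (SpAR (n/d) - 3/Real.pi * Real.log (n/d:ℕ))/(d:ℝ)^2 =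
        (SpAR n - 3/Real.pi * Real.log n) +
        ∑ d ∈ Finset.Icc 2 n, (SpAR (n/d) - 3/Real.pi * Real.log (n/d:ℕ))/(d:ℝ)^2 := by
      rw [hI, Finset.sum_insert (by simp)]; simp
    have h6 : |∑ d ∈ Finset.Icc 2 n, (SpAR (n/d) - 3/Real.pi * Real.log (n/d:ℕ))/(d:ℝ)^2|
        ≤ 4 * (C1+5) * ∑ d ∈ Finset.Icc 2 n, 1/(d:ℝ)^2 := by
      rw [Finset.mul_sum]
      refine (Finset.abs_sum_le_sum_abs _ _).trans (Finset.sum_le_sum fun d hd => ?_)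
      rw [Finset.mem_Icc] at hd
      rw [abs_div, abs_of_nonneg (by positivity : 0 ≤ (d:ℝ)^2), mul_one_div]
      gcongr
      exact ih _ (Nat.div_lt_self (by omega) (by omega)) (Nat.div_pos hd.2 (by omega))
    have h7 : ∑ d ∈ Finset.Icc 2 n, 1/(d:ℝ)^2 ≤ 3/4 := by
      have := sum_inv_sq_le n
      rw [hI, Finset.sum_insert (by simp)] at this
      have hpi4 : Real.pi^2/6 < 7/4 := by nlinarith [Real.pi_lt_d2, Real.pi_gt_three]
      norm_num at this ⊢
      linarith
    have h8 : 4 * (C1+5) * ∑ d ∈ Finset.Icc 2 n, 1/(d:ℝ)^2 ≤ 3 * (C1+5) := by nlinarith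
    rw [h1, h4, h5] at h2
    rw [abs_le] at *
    constructor <;> linarith [h2.1, h2.2, h3.1, h3.2, h6.1, h6.2]

theorem card_mod_bd (a b v m : ℤ) (hm : 0 < m) :
    (((Finset.Ioc a b).filter (fun x => x ≡ v [ZMOD m])).card : ℝ) ≤ max ((b - a : ℝ)/m + 1) 0 ∧
    (b - a : ℝ)/m - 1 ≤ (((Finset.Ioc a b).filter (fun x => x ≡ v [ZMOD m])).card : ℝ) := by
  have h := Int.Ioc_filter_modEq_card a b hm v
  have hR : (((Finset.Ioc a b).filter (fun x => x ≡ v [ZMOD m])).card : ℝ) =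
      max ((⌊(b - v) / (m : ℚ)⌋ : ℝ) - ⌊(a - v) / (m : ℚ)⌋) 0 := by
    have : ((((Finset.Ioc a b).filter (fun x => x ≡ v [ZMOD m])).card : ℤ) : ℝ) = ((max (⌊(b - v) / (m : ℚ)⌋ - ⌊(a - v) / (m : ℚ)⌋) 0 : ℤ) : ℝ) := by
      rw [h]
    push_cast at this
    exact this
  rw [hR]
  have f1 := Int.floor_le ((b - v) / (m : ℚ))
  have f2 := Int.lt_floor_add_one ((b - v) / (m : ℚ))
  have f3 := Int.floor_le ((a - v) / (m : ℚ))
  have f4 := Int.lt_floor_add_one ((a - v) / (m : ℚ))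
  set B := ⌊(b - v) / (m : ℚ)⌋
  set A := ⌊(a - v) / (m : ℚ)⌋
  have g1 : (B:ℝ) ≤ (b - v)/m := by exact_mod_cast f1
  have g2 : (b - v)/m < (B:ℝ) + 1 := by exact_mod_cast f2
  have g3 : (A:ℝ) ≤ (a - v)/m := by exact_mod_cast f3
  have g4 : (a - v)/m < (A:ℝ) + 1 := by exact_mod_cast f4
  have e : (b - a : ℝ)/m = (b-v)/m - (a-v)/m := by ring
  constructor
  · apply max_le_max _ le_rfl
    linarith
  · apply le_max_of_le_left; linarith

def ncAR (α β γ δ : ℤ) : Prop :=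
  if 2 ∣ γ ∧ 2 ∣ δ then 4*(α^2+β^2) < γ^2+δ^2 else α^2+β^2 < γ^2+δ^2

theorem ncAR_of_big {α β γ δ : ℤ} (h : 4*(α^2+β^2) < γ^2+δ^2) : ncAR α β γ δ := by
  unfold ncAR; split_ifs
  · exact h
  · nlinarith [sq_nonneg α, sq_nonneg β]

theorem ncAR_lt {α β γ δ : ℤ} (h : ncAR α β γ δ) : α^2+β^2 < γ^2+δ^2 := by
  unfold ncAR at h; split_ifs at h
  · nlinarith [sq_nonneg α, sq_nonneg β]
  · exact h

def vcond (K α β : ℤ) (v : ℤ × ℤ) : Prop :=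
  α * v.2 - β * v.1 = 2 ∧ 0 < α * v.1 + β * v.2 ∧ α * v.1 + β * v.2 ≤ K ∧ ncAR α β v.1 v.2

theorem fiber_bd (K : ℕ) (α β : ℤ) (hα : 0 < α) (hc : Int.gcd α β = 1) (S : Finset (ℤ × ℤ))
    (hS : ∀ v, v ∈ S ↔ vcond K α β v) :
    (S.card : ℝ) ≤ (K:ℝ)/((α:ℝ)^2+(β:ℝ)^2) + 1 ∧ (K:ℝ)/((α:ℝ)^2+(β:ℝ)^2) - 3 ≤ S.card := by
  obtain ⟨p, q, hpq⟩ := Int.isCoprime_iff_gcd_eq_one.2 hc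
  set m := α^2+β^2 with hm
  have hm0 : 0 < m := by positivity
  have hmR : ((α:ℝ)^2+(β:ℝ)^2) = (m:ℝ) := by rw [hm]; push_cast; ring
  have hmR0 : (0:ℝ) < m := by exact_mod_cast hm0
  rw [hmR]
  set t0 := α * (-2*q) + β * (2*p) with ht0
  constructor
  · have h1 := (card_mod_bd 0 K t0 m hm0).1
    rw [max_eq_left (by simp; positivity)] at h1
    simp only [Int.cast_zero, sub_zero, Int.cast_natCast] at h1
    refine le_trans ?_ h1
    norm_cast
    apply Finset.card_le_card_of_injOn (fun v => α * v.1 + β * v.2)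
    · rintro ⟨γ, δ⟩ hv
      obtain ⟨h1, h2, h3, h4⟩ := (hS _).1 hv
      simp only [Finset.coe_filter, Finset.mem_Ioc, Set.mem_ofPred_eq] at *
      refine ⟨⟨h2, h3⟩, ?_⟩
      rw [Int.modEq_iff_dvd]
      refine ⟨-(p * (γ + 2*q) + q * (δ - 2*p)), ?_⟩
      rw [ht0, hm]
      have e1 : α * (p * (γ + 2*q) + q * (δ - 2*p)) = γ + 2*q := by
        linear_combination γ * hpq + q * h1
      have e2 : β * (p * (γ + 2*q) + q * (δ - 2*p)) = δ - 2*p := by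
        linear_combination δ * hpq - p * h1
      linear_combination α * e1 + β * e2
    · rintro ⟨γ, δ⟩ hv ⟨γ', δ'⟩ hv' heq
      obtain ⟨h1, -⟩ := (hS _).1 hv
      obtain ⟨h1', -⟩ := (hS _).1 hv'
      simp only at *
      have e1 : m * (γ - γ') = 0 := by rw [hm]; linear_combination α * heq - β * h1 + β * h1'
      have e2 : m * (δ - δ') = 0 := by rw [hm]; linear_combination β * heq + α * h1 - α * h1'
      have e1' := (mul_eq_zero.1 e1).resolve_left hm0.ne'
      have e2' := (mul_eq_zero.1 e2).resolve_left hm0.ne'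
      exact Prod.ext (by simp; linarith) (by simp; linarith)
  · have h1 := (card_mod_bd (2*m) K t0 m hm0).2
    have h2 : (K:ℝ)/m - 3 = (((K:ℕ):ℤ) - ((2*m:ℤ):ℝ) : ℝ)/m - 1 := by
      push_cast; field_simp; ring
    rw [h2]
    refine le_trans h1 ?_
    norm_cast
    apply Finset.card_le_card_of_injOn (fun t => (-2*q + (t-t0)/m*α, 2*p + (t-t0)/m*β))
    · intro t ht
      simp only [Finset.coe_filter, Finset.mem_Ioc, Set.mem_ofPred_eq] at ht
      obtain ⟨⟨ht1, ht2⟩, ht3⟩ := ht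
      obtain ⟨k, hk⟩ := (Int.modEq_iff_dvd.1 ht3.symm)
      have hk' : (t - t0)/m = k := by rw [hk]; exact Int.mul_ediv_cancel_left _ hm0.ne'
      simp only [hk']
      apply (hS _).2
      have hdet : α * (2*p + k*β) - β * (-2*q + k*α) = 2 := by linear_combination 2 * hpq
      have hdot : α * (-2*q + k*α) + β * (2*p + k*β) = t := by
        rw [hm] at hk; linear_combination -hk + (ht0)
      refine ⟨hdet, ?_, ?_, ?_⟩
      · simp only [hdot]; linarith
      · simp only [hdot]; exact ht2
      · apply ncAR_of_big
        simp only
        rw [← hm]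
        have id : m * ((-2*q + k*α)^2 + (2*p + k*β)^2) = t^2 + 4 := by
          rw [hm]
          generalize (-2*q + k*α) = x at *
          generalize (2*p + k*β) = y at *
          rw [← hdot]
          linear_combination (α*y-β*x + 2) * hdet
        have : m * (4 * m) < m * ((-2*q + k*α)^2 + (2*p + k*β)^2) := by rw [id]; nlinarith
        exact lt_of_mul_lt_mul_left this hm0.le
    · intro t ht t' ht' heq
      simp only [Finset.coe_filter, Finset.mem_Ioc, Set.mem_ofPred_eq] at ht ht'
      obtain ⟨k, hk⟩ := (Int.modEq_iff_dvd.1 ht.2.symm)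
      obtain ⟨k', hk'⟩ := (Int.modEq_iff_dvd.1 ht'.2.symm)
      simp only [Prod.mk.injEq, hk, hk', Int.mul_ediv_cancel_left _ hm0.ne'] at heq
      have : k = k' := by
        have := heq.1
        have h : k * α = k' * α := by linarith
        exact mul_right_cancel₀ hα.ne' h
      rw [this] at hk; linarith

open Classical in
noncomputable def PAR (K : ℕ) : Finset ((ℤ × ℤ) × (ℤ × ℤ)) :=
  ((Finset.Icc (-(K:ℤ)-3) (K+3) ×ˢ Finset.Icc (-(K:ℤ)-3) (K+3)) ×ˢ
   (Finset.Icc (-(K:ℤ)-3) (K+3) ×ˢ Finset.Icc (-(K:ℤ)-3) (K+3))).filter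
   (fun p => 0 < p.1.1 ∧ 0 ≤ p.1.2 ∧ Int.gcd p.1.1 p.1.2 = 1 ∧ vcond K p.1.1 p.1.2 p.2)

theorem vcond_bd {K α β : ℤ} {v : ℤ × ℤ} (hα : 0 < α) (h : vcond K α β v) :
    α^2+β^2 ≤ K + 1 ∧ v.1^2 + v.2^2 ≤ K^2+4 := by
  obtain ⟨h1, h2, h3, h4⟩ := h
  have h5 := ncAR_lt h4
  obtain ⟨γ, δ⟩ := v
  simp only at *
  have id : (α^2+β^2) * (γ^2+δ^2) = (α*γ+β*δ)^2 + 4 := by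
    linear_combination (α*δ-β*γ + 2) * h1
  have hm0 : 0 < α^2+β^2 := by positivity
  generalize α^2+β^2 = m at *
  generalize γ^2+δ^2 = n at *
  generalize α*γ+β*δ = t at *
  constructor
  · by_contra hcon
    push Not at hcon
    nlinarith
  · nlinarith

theorem mem_PAR (K : ℕ) (p : (ℤ × ℤ) × (ℤ × ℤ)) : p ∈ PAR K ↔
    (0 < p.1.1 ∧ 0 ≤ p.1.2 ∧ Int.gcd p.1.1 p.1.2 = 1 ∧ vcond K p.1.1 p.1.2 p.2) := by
  classical
  unfold PAR
  rw [Finset.mem_filter]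
  refine ⟨fun h => h.2, fun h => ⟨?_, h⟩⟩
  obtain ⟨h1, h2, h3, h4⟩ := h
  obtain ⟨h5, h6⟩ := vcond_bd h1 h4
  simp only [Finset.mem_product, Finset.mem_Icc]
  refine ⟨⟨⟨?_, ?_⟩, ?_, ?_⟩, ⟨?_, ?_⟩, ?_, ?_⟩ <;> nlinarith [sq_nonneg p.1.1, sq_nonneg p.1.2, sq_nonneg p.2.1, sq_nonneg p.2.2]

noncomputable def SqAR (n : ℕ) : Finset (ℕ × ℕ) :=
  (Finset.Icc 1 n ×ˢ Finset.range (n+1)).filter (fun p => Nat.gcd p.1 p.2 = 1)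

theorem PAR_card (K : ℕ) : ∃ C : ℕ × ℕ → ℝ, (PAR K).card = ∑ u ∈ SqAR (Nat.sqrt (K+1)), C u ∧
    ∀ u ∈ SqAR (Nat.sqrt (K+1)), |C u - K * gAR u.1 u.2| ≤ 3 := by
  classical
  refine ⟨fun u => (((PAR K).filter (fun p => (p.1.1.toNat, p.1.2.toNat) = u)).card : ℝ), ?_, ?_⟩
  · rw [← Nat.cast_sum]
    congr 1
    apply Finset.card_eq_sum_card_fiberwise
    intro p hp
    have hp := (mem_PAR K p).1 hp
    obtain ⟨h1, h2, h3, h4⟩ := hp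
    obtain ⟨h5, -⟩ := vcond_bd h1 h4
    obtain ⟨⟨α, β⟩, v⟩ := p
    simp only at *
    obtain ⟨a, rfl⟩ := Int.eq_ofNat_of_zero_le h1.le
    obtain ⟨b, rfl⟩ := Int.eq_ofNat_of_zero_le h2
    norm_cast at *
    show (a, b) ∈ SqAR _
    simp only [SqAR, Finset.mem_filter, Finset.mem_product, Finset.mem_Icc, Finset.mem_range]
    refine ⟨⟨⟨h1, ?_⟩, ?_⟩, by simpa using h3⟩
    · rw [Nat.le_sqrt]; nlinarith
    · apply Nat.lt_succ_of_le; rw [Nat.le_sqrt]; nlinarith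
  · rintro ⟨a, b⟩ hu
    simp only [SqAR, Finset.mem_filter, Finset.mem_product, Finset.mem_Icc, Finset.mem_range] at hu
    obtain ⟨⟨⟨h1, h2⟩, h3⟩, h4⟩ := hu
    have hcard : ((PAR K).filter (fun p => (p.1.1.toNat, p.1.2.toNat) = (a,b))).card =
      (((PAR K).filter (fun p => (p.1.1.toNat, p.1.2.toNat) = (a,b))).image Prod.snd).card := by
      rw [Finset.card_image_of_injOn]
      rintro ⟨⟨α, β⟩, v⟩ hp ⟨⟨α', β'⟩, v'⟩ hp' heq
      simp only [Finset.coe_filter, Set.mem_ofPred_eq, mem_PAR, Prod.mk.injEq] at hp hp' heq ⊢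
      refine ⟨⟨?_, ?_⟩, heq⟩ <;> omega
    have := fiber_bd K a b (by exact_mod_cast h1) (by simpa using h4)
      (((PAR K).filter (fun p => (p.1.1.toNat, p.1.2.toNat) = (a,b))).image Prod.snd) (by
        intro v
        simp only [Finset.mem_image, Finset.mem_filter, mem_PAR, Prod.mk.injEq]
        constructor
        · rintro ⟨⟨⟨α, β⟩, v'⟩, ⟨⟨e1, e2, e3, e4⟩, e5, e6⟩, rfl⟩
          simp only at *
          have e7 : α = a := by omega
          have e8 : β = b := by omega
          rw [← e7, ← e8]; exact e4
        · intro hv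
          exact ⟨((a,b),v), ⟨⟨(by exact_mod_cast h1 : (0:ℤ) < a), by simp, by simpa using h4, hv⟩, by simp, by simp⟩, rfl⟩)
    rw [← hcard] at this
    simp only [gAR, mul_one_div]
    push_cast at this ⊢
    rw [abs_le]
    constructor <;> linarith [this.1, this.2]

theorem PAR_asymp : ∃ C : ℝ, 0 ≤ C ∧ ∀ K : ℕ, 1 ≤ K →
    |((PAR K).card : ℝ) - 3/(2*Real.pi) * K * Real.log K| ≤ C * K := by
  obtain ⟨C, hC0, hC⟩ := SpAR_log
  refine ⟨C + 100, by linarith, fun K hK => ?_⟩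
  obtain ⟨c, hc1, hc2⟩ := PAR_card K
  set n := Nat.sqrt (K+1) with hn
  have hn1 : 1 ≤ n := by rw [hn, Nat.le_sqrt]; omega
  have hn2 : n * n ≤ K + 1 := Nat.sqrt_le _
  have hn3 : K + 1 < (n+1)*(n+1) := Nat.lt_succ_sqrt (K+1)
  have hK' : (1:ℝ) ≤ K := by exact_mod_cast hK
  have hn1' : (1:ℝ) ≤ n := by exact_mod_cast hn1
  have hn2' : (n:ℝ)*n ≤ K+1 := by exact_mod_cast hn2
  have hn3' : (K:ℝ)+1 < (n+1)*(n+1) := by exact_mod_cast hn3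
  have hS : SpAR n = ∑ u ∈ SqAR n, gAR u.1 u.2 := rfl
  have hcard : ((SqAR n).card : ℝ) ≤ 4 * K := by
    have : (SqAR n).card ≤ n * (n+1) := by
      refine (Finset.card_filter_le _ _).trans ?_
      simp
    have : ((SqAR n).card : ℝ) ≤ n * (n+1) := by exact_mod_cast this
    nlinarith
  have h1 : |∑ u ∈ SqAR n, c u - K * SpAR n| ≤ 12 * K := by
    rw [hS, Finset.mul_sum, ← Finset.sum_sub_distrib]
    refine (Finset.abs_sum_le_sum_abs _ _).trans ?_
    refine (Finset.sum_le_sum hc2).trans ?_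
    rw [Finset.sum_const, nsmul_eq_mul]; linarith
  have h2 := hC n hn1
  have hlog : |2 * Real.log n - Real.log K| ≤ 2 := by
    have e : 2 * Real.log n = Real.log (n*n) := by rw [Real.log_mul (by positivity) (by positivity)]; ring
    rw [e, ← Real.log_div (by positivity) (by positivity)]
    have l2 : Real.log 4 ≤ 2 := by
      have : Real.log 4 = 2 * Real.log 2 := by
        rw [show (4:ℝ) = 2*2 by norm_num, Real.log_mul (by norm_num) (by norm_num)]; ring
      rw [this]; linarith [Real.log_two_lt_d9]
    rw [abs_le]; constructor
    · have : (1:ℝ)/4 ≤ n*n/K := by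
        rw [div_le_div_iff₀ (by norm_num) (by linarith)]; nlinarith
      have := Real.log_le_log (by norm_num) this
      rw [Real.log_div (by norm_num) (by norm_num), Real.log_one] at this
      linarith
    · have : (n:ℝ)*n/K ≤ 4 := by
        rw [div_le_iff₀ (by linarith)]; nlinarith
      have := Real.log_le_log (by positivity) this
      linarith
  rw [hc1]
  have hpi := Real.pi_gt_three
  have h3 : |3/Real.pi * Real.log n - 3/(2*Real.pi) * Real.log K| ≤ 1 := by
    have : 3/Real.pi * Real.log n - 3/(2*Real.pi) * Real.log K = 3/(2*Real.pi) * (2 * Real.log n - Real.log K) := by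
      field_simp
    rw [this, abs_mul, abs_of_pos (by positivity)]
    have : 3/(2*Real.pi) ≤ 1/2 := by rw [div_le_div_iff₀ (by positivity) (by positivity)]; linarith
    nlinarith [abs_nonneg (2 * Real.log n - Real.log K)]
  have h4 : |SpAR n - 3/(2*Real.pi) * Real.log K| ≤ C + 1 := by
    have := abs_add_le (SpAR n - 3/Real.pi * Real.log n) (3/Real.pi * Real.log n - 3/(2*Real.pi) * Real.log K)
    rw [sub_add_sub_cancel] at this; linarith
  have h5 : |K * SpAR n - 3/(2*Real.pi) * K * Real.log K| ≤ (C+1) * K := by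
    have : K * SpAR n - 3/(2*Real.pi) * K * Real.log K = K * (SpAR n - 3/(2*Real.pi) * Real.log K) := by ring
    rw [this, abs_mul, abs_of_nonneg (by linarith)]; nlinarith
  have := abs_add_le (∑ u ∈ SqAR n, c u - K * SpAR n) (K * SpAR n - 3/(2*Real.pi) * K * Real.log K)
  rw [sub_add_sub_cancel] at this; nlinarith

abbrev M2Z := Matrix (Fin 2) (Fin 2) ℤ

theorem mk_eq_iff (A B : SL(2, ℤ)) : (QuotientGroup.mk A : PSL2Z) = QuotientGroup.mk B ↔ B = A ∨ B = -A := by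
  rw [QuotientGroup.eq]
  constructor
  · intro h
    obtain ⟨n, hn⟩ := Subgroup.mem_zpowers_iff.mp h
    have hB : B = A * (-1)^n := by rw [hn]; group
    rcases Int.even_or_odd n with he | ho
    · left; rw [hB, he.neg_one_zpow, mul_one]
    · right; rw [hB, ho.neg_one_zpow]; simp
  · rintro (rfl | rfl)
    · simp [pmOne.one_mem]
    · have : A⁻¹ * -A = -1 := by simp
      rw [this]; exact Subgroup.mem_zpowers _

theorem SL_det (A : SL(2, ℤ)) : A.1 0 0 * A.1 1 1 - A.1 0 1 * A.1 1 0 = 1 := by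
  have := A.2; rwa [Matrix.det_fin_two] at this

theorem comm_entries (A B : M2Z) (h : A * B = B * A) :
    A 0 1 * B 1 0 = B 0 1 * A 1 0 ∧
    (A 0 0 - A 1 1) * B 0 1 = (B 0 0 - B 1 1) * A 0 1 ∧
    (A 0 0 - A 1 1) * B 1 0 = (B 0 0 - B 1 1) * A 1 0 := by
  have h00 := congrFun (congrFun h 0) 0
  have h01 := congrFun (congrFun h 0) 1
  have h10 := congrFun (congrFun h 1) 0
  simp only [Matrix.mul_apply, Fin.sum_univ_two] at h00 h01 h10
  refine ⟨by linarith, by linarith, by linarith⟩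

theorem SL_comm_mat {A B : SL(2, ℤ)} (h : A * B = B * A) : A.1 * B.1 = B.1 * A.1 := by
  have := congrArg Subtype.val h
  simpa using this

theorem small_comm (A B : SL(2, ℤ)) (h : A * B = B * A) (hA : 2 < |Matrix.trace A.1|)
    (hB : |Matrix.trace B.1| ≤ 2) : B = 1 ∨ B = -1 := by
  obtain ⟨h1, h2, h3⟩ := comm_entries A.1 B.1 (SL_comm_mat h)
  have dA := SL_det A
  have dB := SL_det B
  rw [Matrix.trace_fin_two] at hA hB
  have e : ∀ X : M2Z, X = !![X 0 0, X 0 1; X 1 0, X 1 1] := fun X => Matrix.eta_fin_two X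
  set a := A.1 0 0
  set b := A.1 0 1
  set c := A.1 1 0
  set d := A.1 1 1
  have hDA : 0 < (a-d)^2 + 4*b*c := by
    have : 2^2 < (a+d)^2 := sq_lt_sq.2 (by simpa using hA)
    nlinarith
  have hDB : (B.1 0 0 - B.1 1 1)^2 + 4*B.1 0 1*B.1 1 0 ≤ 0 := by
    have : (B.1 0 0 + B.1 1 1)^2 ≤ 2^2 := sq_le_sq.2 (by simpa using hB)
    nlinarith
  have eB := e B.1
  generalize B.1 0 0 = p at *
  generalize B.1 0 1 = q at *
  generalize B.1 1 0 = r at *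
  generalize B.1 1 1 = s at *
  have hq : q^2 * ((a-d)^2 + 4*b*c) = b^2 * ((p-s)^2+4*q*r) := by
    linear_combination (q*(a-d) + (p-s)*b) * h2 - 4*b*q*h1
  have hr : r^2 * ((a-d)^2 + 4*b*c) = c^2 * ((p-s)^2+4*q*r) := by
    linear_combination (r*(a-d) + (p-s)*c) * h3 + 4*c*r*h1
  have hp : (p-s)^2 * ((a-d)^2 + 4*b*c) = (a-d)^2 * ((p-s)^2+4*q*r) := by
    linear_combination (-4*(p-s)*c) * h2 - 4*(a-d)*q*h3
  have z1 : q = 0 := by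
    by_contra hne
    have : 0 < q^2 := by positivity
    nlinarith [sq_nonneg b]
  have z2 : r = 0 := by
    by_contra hne
    have : 0 < r^2 := by positivity
    nlinarith [sq_nonneg c]
  have z3 : p - s = 0 := by
    by_contra hne
    have : 0 < (p-s)^2 := by positivity
    nlinarith [sq_nonneg (a-d)]
  have z4 : s = p := by linarith
  subst z1 z2 z4
  have : (s-1)*(s+1) = 0 := by linarith
  rcases mul_eq_zero.1 this with h | h
  · left
    have : s = 1 := by linarith
    subst this
    apply Subtype.ext; rw [eB]; ext i j; fin_cases i <;> fin_cases j <;> rfl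
  · right
    have : s = -1 := by linarith
    subst this
    apply Subtype.ext; rw [eB]; ext i j; fin_cases i <;> fin_cases j <;> simp

theorem desc_int (t u P Q : ℤ) (hu : 3 ≤ |u|) (htu : |u| ≤ |t|) (h1 : P + Q = t * u)
    (h2 : P * Q = t^2 + u^2 - 4) : |P| < |t| ∨ |Q| < |t| := by
  by_contra hcon
  push Not at hcon
  obtain ⟨c1, c2⟩ := hcon
  have h3 : |P| + |Q| = |t| * |u| := by
    rw [← abs_mul, ← h1]
    have hpos : 0 ≤ P * Q := by rw [h2]; nlinarith [sq_abs u, sq_abs t]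
    exact ((abs_add_eq_add_abs_iff P Q).2 (by
      rcases (mul_nonneg_iff.1 hpos) with h | h
      · left; exact h
      · right; exact h)).symm
  have h4 : |P| * |Q| = |t|^2 + |u|^2 - 4 := by
    rw [← abs_mul, h2, sq_abs, sq_abs, abs_of_nonneg]
    nlinarith [sq_abs u, sq_abs t]
  generalize |P| = p at *
  generalize |Q| = q at *
  generalize |t| = t at *
  generalize |u| = u at *
  have h5 : 0 ≤ (p - t) * (q - t) := mul_nonneg (by linarith) (by linarith)
  have h6 : (p - t) * (q - t) = (u - 2) * (u + 2 - t^2) := by linear_combination h4 - t * h3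
  have h7 : u + 2 - t^2 < 0 := by nlinarith
  nlinarith

theorem tr_sum (B C : SL(2, ℤ)) : Matrix.trace (B * C).1 + Matrix.trace (B * C⁻¹).1 =
    Matrix.trace B.1 * Matrix.trace C.1 := by
  simp only [Matrix.SpecialLinearGroup.coe_mul, Matrix.SpecialLinearGroup.coe_inv, Matrix.trace_fin_two,
    Matrix.adjugate_fin_two, Matrix.mul_apply, Fin.sum_univ_two]
  simp
  ring

theorem tr_prod (B C : SL(2, ℤ)) (h : B * C = C * B) :
    Matrix.trace (B * C).1 * Matrix.trace (B * C⁻¹).1 =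
    (Matrix.trace B.1)^2 + (Matrix.trace C.1)^2 - 4 := by
  obtain ⟨h1, h2, h3⟩ := comm_entries B.1 C.1 (SL_comm_mat h)
  have dA := SL_det B
  have dB := SL_det C
  simp only [Matrix.SpecialLinearGroup.coe_mul, Matrix.SpecialLinearGroup.coe_inv, Matrix.trace_fin_two,
    Matrix.adjugate_fin_two, Matrix.mul_apply, Fin.sum_univ_two]
  simp
  generalize B.1 0 0 = p at *
  generalize B.1 0 1 = q at *
  generalize B.1 1 0 = r at *
  generalize B.1 1 1 = s at *
  generalize C.1 0 0 = a at *
  generalize C.1 0 1 = b at *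
  generalize C.1 1 0 = c at *
  generalize C.1 1 1 = d at *
  have k1 : ((p-s)*(a-d)+2*q*c+2*r*b)^2 = ((p-s)^2+4*q*r)*((a-d)^2+4*b*c) := by
    linear_combination (4*((a-d)*q-(p-s)*b)) * h3 + 4*(q*c-b*r)*h1
  have k2 : ((p-s)^2+4*q*r) = (p+s)^2 - 4 := by linear_combination (-4)*dA
  have k3 : ((a-d)^2+4*b*c) = (a+d)^2 - 4 := by linear_combination (-4)*dB
  rw [k2, k3] at k1
  linarith

theorem central_desc (A B0 : SL(2, ℤ)) (hA : 2 < |Matrix.trace A.1|) (h0 : A * B0 = B0 * A)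
    (hB0 : 2 < |Matrix.trace B0.1|)
    (hmin : ∀ D : SL(2, ℤ), A * D = D * A → 2 < |Matrix.trace D.1| → |Matrix.trace B0.1| ≤ |Matrix.trace D.1|)
    (k : ℕ) : ∀ B : SL(2, ℤ), A * B = B * A → B0 * B = B * B0 → (Matrix.trace B.1).natAbs = k →
    ∃ n : ℤ, (QuotientGroup.mk B : PSL2Z) = (QuotientGroup.mk B0)^n := by
  induction k using Nat.strong_induction_on with
  | _ k ih =>
    intro B hB hBB hk
    by_cases hs : |Matrix.trace B.1| ≤ 2
    · refine ⟨0, ?_⟩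
      rw [zpow_zero, ← QuotientGroup.mk_one, mk_eq_iff]
      rcases small_comm A B hB hA hs with h | h
      · left; exact h.symm
      · right; rw [h]; simp
    · push Not at hs
      have hm := hmin B hB hs
      have c0 : Commute A B0 := h0
      have c1 : Commute A B := hB
      have c2 : Commute B0 B := hBB
      rcases desc_int _ _ _ _ (by omega) hm (tr_sum B B0) (tr_prod B B0 hBB.symm) with h | h
      · obtain ⟨n, hn⟩ := ih _ (by rw [Int.abs_eq_natAbs, Int.abs_eq_natAbs] at h; omega : (Matrix.trace (B * B0).1).natAbs < k) (B * B0)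
          (c1.mul_right c0).eq (c2.mul_right (Commute.refl _)).eq rfl
        refine ⟨n - 1, ?_⟩
        rw [_root_.zpow_sub_one, ← hn, QuotientGroup.mk_mul]; group
      · obtain ⟨n, hn⟩ := ih _ (by rw [Int.abs_eq_natAbs, Int.abs_eq_natAbs] at h; omega : (Matrix.trace (B * B0⁻¹).1).natAbs < k) (B * B0⁻¹)
          (c1.mul_right c0.inv_right).eq (c2.mul_right (Commute.refl B0).inv_right).eq rfl
        refine ⟨n + 1, ?_⟩
        rw [_root_.zpow_add_one, ← hn, QuotientGroup.mk_mul, QuotientGroup.mk_inv]; group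

theorem comm_trans (A B C : SL(2, ℤ)) (hA : 2 < |Matrix.trace A.1|) (hB : A * B = B * A)
    (hC : A * C = C * A) : B * C = C * B := by
  obtain ⟨h1, h2, h3⟩ := comm_entries A.1 B.1 (SL_comm_mat hB)
  obtain ⟨g1, g2, g3⟩ := comm_entries A.1 C.1 (SL_comm_mat hC)
  have dA := SL_det A
  rw [Matrix.trace_fin_two] at hA
  have hsq : 2^2 < (A.1 0 0 + A.1 1 1)^2 := sq_lt_sq.2 (by simpa using hA)
  apply Subtype.ext
  simp only [Matrix.SpecialLinearGroup.coe_mul]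
  generalize A.1 0 0 = a at *
  generalize A.1 0 1 = b at *
  generalize A.1 1 0 = c at *
  generalize A.1 1 1 = d at *
  have nz : a - d ≠ 0 ∨ b ≠ 0 ∨ c ≠ 0 := by
    by_contra hcon
    push Not at hcon
    obtain ⟨z1, z2, z3⟩ := hcon
    have : a = d := by linarith
    subst this z2 z3
    nlinarith
  have k1 : B.1 0 1 * C.1 1 0 = C.1 0 1 * B.1 1 0 := by
    generalize B.1 0 0 = p at *
    generalize B.1 0 1 = q at *
    generalize B.1 1 0 = r at *
    generalize B.1 1 1 = s at *
    generalize C.1 0 0 = p' at *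
    generalize C.1 0 1 = q' at *
    generalize C.1 1 0 = r' at *
    generalize C.1 1 1 = s' at *
    rcases nz with hz | hz | hz
    · have := mul_ne_zero hz hz
      apply mul_left_cancel₀ this
      linear_combination r'*(a-d)*h2 + b*(p-s)*g3 - r*(a-d)*g2 -b*(p'-s')*h3
    · have := mul_ne_zero hz hz
      apply mul_left_cancel₀ this
      linear_combination b*q*g1 - b*q'*h1
    · have := mul_ne_zero hz hz
      apply mul_left_cancel₀ this
      linear_combination c*r*g1 - c*r'*h1
  have k2 : (B.1 0 0 - B.1 1 1) * C.1 0 1 = (C.1 0 0 - C.1 1 1) * B.1 0 1 := by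
    generalize B.1 0 0 = p at *
    generalize B.1 0 1 = q at *
    generalize B.1 1 0 = r at *
    generalize B.1 1 1 = s at *
    generalize C.1 0 0 = p' at *
    generalize C.1 0 1 = q' at *
    generalize C.1 1 0 = r' at *
    generalize C.1 1 1 = s' at *
    rcases nz with hz | hz | hz
    · apply mul_left_cancel₀ hz
      linear_combination (p-s) * g2 - (p'-s')*h2
    · apply mul_left_cancel₀ hz
      linear_combination (-q')*h2+q*g2
    · apply mul_left_cancel₀ hz
      linear_combination (-(p-s))*g1 + (p'-s')*h1 - r'*h2 + r * g2+(a-d) * k1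
  have k3 : (B.1 0 0 - B.1 1 1) * C.1 1 0 = (C.1 0 0 - C.1 1 1) * B.1 1 0 := by
    generalize B.1 0 0 = p at *
    generalize B.1 0 1 = q at *
    generalize B.1 1 0 = r at *
    generalize B.1 1 1 = s at *
    generalize C.1 0 0 = p' at *
    generalize C.1 0 1 = q' at *
    generalize C.1 1 0 = r' at *
    generalize C.1 1 1 = s' at *
    rcases nz with hz | hz | hz
    · apply mul_left_cancel₀ hz
      linear_combination (p-s) * g3 - (p'-s')*h3
    · apply mul_left_cancel₀ hz
      linear_combination (p-s)*g1 - (p'-s')*h1 - q'*h3 + q * g3 -(a-d) * k1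
    · apply mul_left_cancel₀ hz
      linear_combination (-r')*h3+r*g3
  ext i j
  fin_cases i <;> fin_cases j <;> simp [Matrix.mul_apply, Fin.sum_univ_two] <;> linarith

theorem central (A B : SL(2, ℤ)) (hA : 2 < |Matrix.trace A.1|) (hp : IsPrim (QuotientGroup.mk A))
    (hB : A * B = B * A) : ∃ n : ℤ, B = A^n ∨ B = -A^n := by
  suffices h : ∃ n : ℤ, (QuotientGroup.mk B : PSL2Z) = (QuotientGroup.mk A)^n by
    obtain ⟨n, hn⟩ := h
    rw [← QuotientGroup.mk_zpow, mk_eq_iff] at hn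
    refine ⟨n, ?_⟩
    rcases hn with h | h
    · left; exact h.symm
    · right; rw [h]; simp
  classical
  let S : Set ℕ := {k | ∃ D : SL(2, ℤ), A * D = D * A ∧ 2 < |Matrix.trace D.1| ∧ (Matrix.trace D.1).natAbs = k}
  have hS : S.Nonempty := ⟨_, A, rfl, hA, rfl⟩
  obtain ⟨B0, h0, hB0, hk⟩ := Nat.sInf_mem hS
  have hmin : ∀ D : SL(2, ℤ), A * D = D * A → 2 < |Matrix.trace D.1| →
      |Matrix.trace B0.1| ≤ |Matrix.trace D.1| := by
    intro D h1 h2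
    have := Nat.sInf_le (show (Matrix.trace D.1).natAbs ∈ S from ⟨D, h1, h2, rfl⟩)
    rw [← hk] at this
    rw [Int.abs_eq_natAbs, Int.abs_eq_natAbs]
    omega
  obtain ⟨k, hkA⟩ := central_desc A B0 hA h0 hB0 hmin _ A rfl h0.symm rfl
  obtain ⟨n, hnB⟩ := central_desc A B0 hA h0 hB0 hmin _ B hB (comm_trans A B0 B hA h0 hB) rfl
  have hk1 : k = 1 ∨ k = -1 := by
    by_contra hcon
    push Not at hcon
    by_cases hk0 : k = 0
    · rw [hk0, zpow_zero, ← QuotientGroup.mk_one, mk_eq_iff] at hkA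
      have : A = 1 ∨ A = -1 := by
        rcases hkA with h | h
        · left; exact h.symm
        · right; rw [h]; simp
      rcases this with h | h <;> rw [h] at hA <;> simp [Matrix.trace_fin_two] at hA
    · apply hp
      rcases lt_or_gt_of_ne hk0 with h | h
      · refine ⟨(QuotientGroup.mk B0)⁻¹, k.natAbs, by omega, ?_⟩
        rw [hkA, inv_pow, ← zpow_natCast, ← _root_.zpow_neg]; congr 1; omega
      · refine ⟨(QuotientGroup.mk B0), k.natAbs, by omega, ?_⟩
        rw [hkA, ← zpow_natCast]; congr 1; omega
  rcases hk1 with h | h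
  · refine ⟨n, ?_⟩
    rw [hnB, hkA, h, zpow_one]
  · refine ⟨-n, ?_⟩
    rw [hnB, hkA, h]; group

theorem no_inv (A : SL(2, ℤ)) (hA : 2 < |Matrix.trace A.1|) (F : M2Z) (hF : F.det = -1)
    (hF2 : F * F = 1 ∨ F * F = -1) (hc : A.1 * F = F * A.1) : False := by
  obtain ⟨h1, h2, h3⟩ := comm_entries A.1 F hc
  have dA := SL_det A
  rw [Matrix.det_fin_two] at hF
  rw [Matrix.trace_fin_two] at hA
  have hsq : 2^2 < (A.1 0 0 + A.1 1 1)^2 := sq_lt_sq.2 (by simpa using hA)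
  have hF3 : ∃ e : ℤ, F * F = e • 1 := by
    rcases hF2 with h | h
    · exact ⟨1, by simp [h]⟩
    · exact ⟨-1, by simp [h]⟩
  obtain ⟨e, he⟩ := hF3
  have f00 := congrFun (congrFun he 0) 0
  have f01 := congrFun (congrFun he 0) 1
  have f10 := congrFun (congrFun he 1) 0
  have f11 := congrFun (congrFun he 1) 1
  simp [Matrix.mul_apply, Fin.sum_univ_two] at f00 f01 f10 f11
  generalize A.1 0 0 = a at *
  generalize A.1 0 1 = b at *
  generalize A.1 1 0 = c at *
  generalize A.1 1 1 = d at *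
  generalize F 0 0 = p at *
  generalize F 0 1 = q at *
  generalize F 1 0 = r at *
  generalize F 1 1 = s at *
  have hs : p + s = 0 := by
    by_contra hne
    have hq : q = 0 := (mul_eq_zero.1 (by linarith : q * (p+s) = 0)).resolve_right hne
    have hr : r = 0 := (mul_eq_zero.1 (by linarith : r * (p+s) = 0)).resolve_right hne
    subst hq hr
    have : (p+s)*(p-s) = 0 := by linarith
    have := (mul_eq_zero.1 this).resolve_left hne
    have : s = p := by linarith
    subst this
    nlinarith
  have hs' : s = -p := by linarith
  subst hs'
  have key : (a*p + b*r + c*q - d*p)^2 = (a+d)^2 - 4 := by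
    have k1 : ((a-d)*(p - -p)+2*b*r+2*c*q)^2 = ((a-d)^2+4*b*c)*((p - -p)^2+4*q*r) := by
      linear_combination (4*((p - -p)*b-(a-d)*q)) * h3 + 4*(b*r-q*c)*h1
    have k2 : ((p - -p)^2+4*q*r) = 4 := by linear_combination (-4) * hF
    have k3 : ((a-d)^2+4*b*c) = (a+d)^2 - 4 := by linear_combination (-4)*dA
    rw [k2, k3] at k1
    nlinarith
  generalize a*p + b*r + c*q - d*p = w at *
  generalize a + d = t at *
  have e1 : |w|^2 = |t|^2 - 4 := by rw [sq_abs, sq_abs]; exact key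
  have w0 := abs_nonneg w
  generalize |w| = w at *
  generalize |t| = t at *
  have : w < t := by nlinarith
  have : w ≤ t - 1 := by omega
  rcases eq_or_lt_of_le this with h | h
  · subst h
    have : 2 * t = 5 := by linarith
    omega
  · nlinarith

def mkSL (a b c d : ℤ) (h : a * d - b * c = 1) : SL(2, ℤ) :=
  ⟨!![a, b; c, d], by rw [Matrix.det_fin_two_of]; exact h⟩

theorem mkSL_val (a b c d : ℤ) (h : a * d - b * c = 1) : (mkSL a b c d h).1 = !![a, b; c, d] := rfl

theorem tr0_int (a b c : ℤ) (h0 : ¬ a = 0) (dH : a * -a - b * c = 1) :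
    (a - b).natAbs < a.natAbs ∨ (a + b).natAbs < a.natAbs ∨ (a - c).natAbs < a.natAbs ∨
    (a + c).natAbs < a.natAbs := by
  have hb : b ≠ 0 := by rintro rfl; nlinarith [sq_nonneg a]
  have hc : c ≠ 0 := by rintro rfl; nlinarith [sq_nonneg a]
  have hbc : |b| * |c| = |a|^2 + 1 := by
    rw [← abs_mul, sq_abs, show b * c = -(a^2+1) by linarith, abs_neg, abs_of_nonneg (by positivity)]
  have hor : |b| ≤ |a| ∨ |c| ≤ |a| := by
    by_contra hcon
    push Not at hcon
    have := abs_pos.2 h0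
    nlinarith
  rw [Int.abs_eq_natAbs, Int.abs_eq_natAbs, Int.abs_eq_natAbs] at hor
  clear dH hbc
  omega

theorem tr0_conj (n : ℕ) : ∀ H : SL(2, ℤ), (H.1 0 0).natAbs = n → H.1 0 0 + H.1 1 1 = 0 →
    ∃ Q : SL(2, ℤ), Q * H * Q⁻¹ = ModularGroup.S ∨ Q * H * Q⁻¹ = -ModularGroup.S := by
  induction n using Nat.strong_induction_on with
  | _ n ih =>
    intro H hn ht
    have dH := SL_det H
    have key : ∀ Q : SL(2, ℤ), ((Q * H * Q⁻¹).1 0 0).natAbs < n →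
        ∃ Q : SL(2, ℤ), Q * H * Q⁻¹ = ModularGroup.S ∨ Q * H * Q⁻¹ = -ModularGroup.S := by
      intro Q hQ
      obtain ⟨Q', h⟩ := ih _ hQ (Q * H * Q⁻¹) rfl (by
        have : Matrix.trace (Q * H * Q⁻¹).1 = Matrix.trace H.1 := by
          rw [Matrix.SpecialLinearGroup.coe_mul, Matrix.trace_mul_comm,
            ← Matrix.SpecialLinearGroup.coe_mul]
          simp
        rw [Matrix.trace_fin_two, Matrix.trace_fin_two] at this
        linarith)
      refine ⟨Q' * Q, ?_⟩
      have e : Q' * Q * H * (Q' * Q)⁻¹ = Q' * (Q * H * Q⁻¹) * Q'⁻¹ := by group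
      rw [e]; exact h
    by_cases h0 : H.1 0 0 = 0
    · refine ⟨1, ?_⟩
      have h1 : H.1 1 1 = 0 := by linarith
      have h2 : H.1 0 1 * H.1 1 0 = -1 := by rw [h0] at dH; linarith
      have e := Matrix.eta_fin_two H.1
      rw [h0, h1] at e
      rcases Int.mul_eq_neg_one_iff_eq_one_or_neg_one.1 h2 with ⟨h3, h4⟩ | ⟨h3, h4⟩
      · right
        simp only [one_mul, inv_one, mul_one]
        apply Subtype.ext
        rw [e, h3, h4, Matrix.SpecialLinearGroup.coe_neg]; ext i j; fin_cases i <;> fin_cases j <;> simp [ModularGroup.S]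
      · left
        simp only [one_mul, inv_one, mul_one]
        apply Subtype.ext
        rw [e, h3, h4]; ext i j; fin_cases i <;> fin_cases j <;> simp [ModularGroup.S]
    · have e : ∀ p q : ℤ, ((mkSL (1+p*q) p q 1 (by ring)) * H * (mkSL (1+p*q) p q 1 (by ring))⁻¹).1 0 0 =
          (1+p*q) * H.1 0 0 + p * H.1 1 0 - q * ((1+p*q) * H.1 0 1 + p * H.1 1 1) := by
        intro p q
        rw [Matrix.SpecialLinearGroup.coe_mul, Matrix.SpecialLinearGroup.coe_mul,
          Matrix.SpecialLinearGroup.coe_inv, Matrix.adjugate_fin_two, mkSL_val]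
        simp only [Matrix.mul_apply, Fin.sum_univ_two]
        simp
        ring
      have h1 : H.1 1 1 = -H.1 0 0 := by linarith
      have kk : ∀ p q : ℤ, ((1+p*q) * H.1 0 0 + p * H.1 1 0 - q * ((1+p*q) * H.1 0 1 + p * H.1 1 1)).natAbs < n →
          ∃ Q : SL(2, ℤ), Q * H * Q⁻¹ = ModularGroup.S ∨ Q * H * Q⁻¹ = -ModularGroup.S := by
        intro p q h
        apply key (mkSL (1+p*q) p q 1 (by ring))
        rw [e]; exact h
      rw [h1] at dH
      rcases tr0_int _ _ _ h0 dH with h | h | h | h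
      · apply kk 0 1; simp; omega
      · apply kk 0 (-1); simp; omega
      · apply kk (-1) 0; simp; omega
      · apply kk 1 0; simp; omega

theorem trace_conj (Q H : SL(2, ℤ)) : Matrix.trace (Q * H * Q⁻¹).1 = Matrix.trace H.1 := by
  rw [Matrix.SpecialLinearGroup.coe_mul, Matrix.trace_mul_comm, ← Matrix.SpecialLinearGroup.coe_mul]
  simp

theorem trace_SLneg (H : SL(2, ℤ)) : Matrix.trace (-H).1 = -Matrix.trace H.1 := by
  simp

theorem trace_SLinv (H : SL(2, ℤ)) : Matrix.trace (H⁻¹).1 = Matrix.trace H.1 := by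
  simp [Matrix.SpecialLinearGroup.coe_inv, Matrix.adjugate_fin_two, Matrix.trace_fin_two, add_comm]

theorem conj_pos (A B P : SL(2, ℤ)) (hA : 0 < Matrix.trace A.1) (hB : 0 < Matrix.trace B.1)
    (h : (QuotientGroup.mk P : PSL2Z) * QuotientGroup.mk A * (QuotientGroup.mk P)⁻¹ = QuotientGroup.mk B) :
    P * A * P⁻¹ = B := by
  rw [← QuotientGroup.mk_mul, ← QuotientGroup.mk_inv, ← QuotientGroup.mk_mul, mk_eq_iff] at h
  rcases h with h | h
  · exact h.symm
  · exfalso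
    have := congrArg (fun X : SL(2, ℤ) => Matrix.trace X.1) h
    simp only [trace_SLneg, trace_conj] at this
    linarith

theorem isPrim_conj {γ δ : PSL2Z} (h : IsPrim γ) (hc : IsConj γ δ) : IsPrim δ := by
  rintro ⟨ε, n, hn, he⟩
  obtain ⟨c, hc⟩ := isConj_iff.1 hc
  refine h ⟨c⁻¹ * ε * c, n, hn, ?_⟩
  have e : (c⁻¹ * ε * c)^n = c⁻¹ * ε^n * c := by
    have := conj_pow (a := c⁻¹) (b := ε) (i := n)
    simpa using this
  rw [e, he, ← hc]; group

theorem rec_tr0 (H A : SL(2, ℤ)) (hA : 2 < Matrix.trace A.1) (h : H * A * H⁻¹ = A⁻¹) :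
    Matrix.trace H.1 = 0 := by
  have h1 := tr_sum H A
  have h2 := tr_sum (H * A) A
  have h3 : H * A = A⁻¹ * H := by rw [← h]; group
  have h4 : Matrix.trace (H * A⁻¹).1 = Matrix.trace (H * A).1 := by
    rw [h3, Matrix.SpecialLinearGroup.coe_mul, Matrix.trace_mul_comm, ← Matrix.SpecialLinearGroup.coe_mul]
  have h5 : Matrix.trace (H * A * A).1 = Matrix.trace H.1 := by
    rw [h3, ← trace_conj A⁻¹ H]; simp
  have h6 : H * A * A⁻¹ = H := by group
  rw [h6, h5] at h2
  rw [h4] at h1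
  generalize Matrix.trace H.1 = u at *
  generalize Matrix.trace (H * A).1 = v at *
  generalize Matrix.trace A.1 = t at *
  have : u * (t^2 - 4) = 0 := by linear_combination (-2) * h2 - t * h1
  rcases mul_eq_zero.1 this with h | h
  · exact h
  · nlinarith

noncomputable def sqA (x y z : ℤ) : SL(2, ℤ) :=
  if h : x * z - y^2 = -1 then mkSL (x^2+y^2) (y*(x+z)) (y*(x+z)) (y^2+z^2)
    (by linear_combination (x*z-y^2-1)*h) else 1

theorem sqA_val {x y z : ℤ} (h : x * z - y^2 = -1) :
    (sqA x y z).1 = !![x^2+y^2, y*(x+z); y*(x+z), y^2+z^2] := by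
  rw [sqA, dif_pos h, mkSL_val]

theorem sqA_tr {x y z : ℤ} (h : x * z - y^2 = -1) :
    Matrix.trace (sqA x y z).1 = (x+z)^2 + 2 := by
  rw [sqA_val h, Matrix.trace_fin_two_of]; linear_combination -2 * h

theorem sqA_neg (x y z : ℤ) : sqA (-x) (-y) (-z) = sqA x y z := by
  by_cases h : x * z - y^2 = -1
  · have h' : (-x) * (-z) - (-y)^2 = -1 := by linarith
    apply Subtype.ext
    rw [sqA_val h, sqA_val h']
    ext i j; fin_cases i <;> fin_cases j <;> simp <;> ring
  · have h' : ¬ ((-x) * (-z) - (-y)^2 = -1) := by intro h'; apply h; linarith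
    rw [sqA, sqA, dif_neg h, dif_neg h']

theorem amb_R (A : SL(2, ℤ)) (hA : 2 < Matrix.trace A.1)
    (ha : ∃ δ : PSL2Z, IsConj (QuotientGroup.mk A) δ ∧ (AmbFst δ ∨ AmbSnd δ)) :
    ∃ R : M2Z, R.det = -1 ∧ R * A.1 = (A⁻¹).1 * R := by
  obtain ⟨δ, hc, hδ⟩ := ha
  have h1 : ∃ (V : M2Z) (D : SL(2, ℤ)), V.det = -1 ∧ (QuotientGroup.mk D : PSL2Z) = δ ∧
      (V * D.1 * V⁻¹ = (D⁻¹).1 ∨ V * D.1 * V⁻¹ = -(D⁻¹).1) := by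
    rcases hδ with ⟨D, h, h'⟩ | ⟨D, h, h'⟩
    · exact ⟨Wmat, D, by simp [Wmat, Matrix.det_fin_two], h, h'⟩
    · exact ⟨W1mat, D, by simp [W1mat, Matrix.det_fin_two], h, h'⟩
  obtain ⟨V, D, hV, hD, hVD⟩ := h1
  have hu : IsUnit V.det := by rw [hV]; exact isUnit_one.neg
  obtain ⟨c, hc⟩ := isConj_iff.1 hc
  obtain ⟨g, rfl⟩ := QuotientGroup.mk_surjective c
  rw [← hD, ← QuotientGroup.mk_mul, ← QuotientGroup.mk_inv, ← QuotientGroup.mk_mul, mk_eq_iff] at hc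
  have htD : Matrix.trace D.1 ≠ 0 := by
    rcases hc with h | h <;> rw [h]
    · rw [trace_conj]; omega
    · rw [trace_SLneg, trace_conj]; omega
  have hVD' : V * D.1 * V⁻¹ = (D⁻¹).1 := by
    rcases hVD with h | h
    · exact h
    · exfalso
      have := congrArg Matrix.trace h
      rw [Matrix.trace_mul_comm, ← Matrix.mul_assoc, Matrix.nonsing_inv_mul _ hu, Matrix.one_mul,
        Matrix.trace_neg, trace_SLinv] at this
      omega
  have h2 : V * D.1 = (D⁻¹).1 * V := by
    rw [← hVD', Matrix.mul_assoc, Matrix.nonsing_inv_mul _ hu, Matrix.mul_one]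
  have h3 : V * (g * A * g⁻¹).1 = ((g * A * g⁻¹)⁻¹).1 * V := by
    rcases hc with h | h
    · rw [← h]; exact h2
    · have h' : g * A * g⁻¹ = -D := by rw [h]; simp
      rw [h']
      have : (-D)⁻¹ = -D⁻¹ := by
        rw [inv_eq_iff_mul_eq_one]; simp
      rw [this]
      simp [h2]
  have gi : (g⁻¹).1 * g.1 = 1 := by rw [← Matrix.SpecialLinearGroup.coe_mul]; simp
  have gi' : g.1 * (g⁻¹).1 = 1 := by rw [← Matrix.SpecialLinearGroup.coe_mul]; simp
  refine ⟨(g⁻¹).1 * V * g.1, ?_, ?_⟩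
  · rw [Matrix.det_mul, Matrix.det_mul, hV, g.2, (g⁻¹).2]; norm_num
  · have e : (g * A * g⁻¹)⁻¹ = g * A⁻¹ * g⁻¹ := by group
    rw [e] at h3
    simp only [Matrix.SpecialLinearGroup.coe_mul] at h3
    calc (g⁻¹).1 * V * g.1 * A.1 = (g⁻¹).1 * (V * (g.1 * A.1 * (g⁻¹).1)) * g.1 := by
          simp only [Matrix.mul_assoc]; rw [gi, Matrix.mul_one]
      _ = ((g⁻¹).1 * g.1) * (A⁻¹).1 * ((g⁻¹).1 * V * g.1) := by
          rw [h3]; simp only [Matrix.mul_assoc]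
      _ = (A⁻¹).1 * ((g⁻¹).1 * V * g.1) := by rw [gi, Matrix.one_mul]

theorem S_val : (ModularGroup.S : SL(2, ℤ)).1 = !![0, -1; 1, 0] := rfl

theorem sym_of_rec (A : SL(2, ℤ)) (h : ModularGroup.S * A * ModularGroup.S⁻¹ = A⁻¹) : A.1 0 1 = A.1 1 0 := by
  have h1 : ModularGroup.S * A = A⁻¹ * ModularGroup.S := by rw [← h]; group
  have := congrFun (congrFun (congrArg Subtype.val h1) 0) 0
  rw [Matrix.SpecialLinearGroup.coe_mul, Matrix.SpecialLinearGroup.coe_mul, Matrix.SpecialLinearGroup.coe_inv,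
    Matrix.adjugate_fin_two, S_val] at this
  simp only [Matrix.mul_apply, Fin.sum_univ_two] at this
  simp at this
  linarith

theorem lemU (γ : PSL2Z) (hp : IsPrim γ) (hh : IsHyp γ) (hr : IsConj γ γ⁻¹)
    (ha : ∃ δ : PSL2Z, IsConj γ δ ∧ (AmbFst δ ∨ AmbSnd δ)) :
    ∃ x y z : ℤ, x * z - y^2 = -1 ∧ 0 < x + z ∧ IsConj γ (QuotientGroup.mk (sqA x y z)) := by
  have h1 : ∃ A : SL(2, ℤ), (QuotientGroup.mk A : PSL2Z) = γ ∧ 2 < Matrix.trace A.1 := by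
    obtain ⟨A, hA, ht⟩ := hh
    rcases lt_abs.1 ht with h | h
    · exact ⟨A, hA, h⟩
    · refine ⟨-A, ?_, by rw [trace_SLneg]; exact h⟩
      rw [← hA, mk_eq_iff]; right; simp
  obtain ⟨A0, rfl, hA0⟩ := h1
  obtain ⟨c, hc⟩ := isConj_iff.1 hr
  obtain ⟨H, rfl⟩ := QuotientGroup.mk_surjective c
  have hH := conj_pos A0 A0⁻¹ H (by linarith) (by rw [trace_SLinv]; linarith) hc
  have hH0 := rec_tr0 H A0 hA0 hH
  rw [Matrix.trace_fin_two] at hH0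
  obtain ⟨Q, hQ⟩ := tr0_conj _ H rfl hH0
  set A : SL(2, ℤ) := Q * A0 * Q⁻¹ with hAdef
  have hA : 2 < Matrix.trace A.1 := by rw [hAdef, trace_conj]; exact hA0
  have hcA : IsConj (QuotientGroup.mk A0 : PSL2Z) (QuotientGroup.mk A) :=
    isConj_iff.2 ⟨QuotientGroup.mk Q, by rw [hAdef, QuotientGroup.mk_mul, QuotientGroup.mk_mul, QuotientGroup.mk_inv]⟩
  have hpA := isPrim_conj hp hcA
  have hS : ModularGroup.S * A * ModularGroup.S⁻¹ = A⁻¹ := by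
    have e : (Q * H * Q⁻¹) * A * (Q * H * Q⁻¹)⁻¹ = A⁻¹ := by
      have : A⁻¹ = Q * (H * A0 * H⁻¹) * Q⁻¹ := by rw [hH, hAdef]; group
      rw [this, hAdef]; group
    rcases hQ with h | h
    · rw [h] at e; exact e
    · rw [h] at e
      have : (-ModularGroup.S)⁻¹ = -ModularGroup.S⁻¹ := by
        rw [inv_eq_iff_mul_eq_one]; simp
      rw [this] at e; simpa using e
  obtain ⟨R, hR, hRA⟩ := amb_R A hA (by
    obtain ⟨δ, h, h'⟩ := ha
    exact ⟨δ, hcA.symm.trans h, h'⟩)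
  have hsym := sym_of_rec A hS
  have dA := SL_det A
  have Ai : A.1 * (A⁻¹).1 = 1 := by rw [← Matrix.SpecialLinearGroup.coe_mul]; simp
  have Ai' : (A⁻¹).1 * A.1 = 1 := by rw [← Matrix.SpecialLinearGroup.coe_mul]; simp
  set S : SL(2, ℤ) := ModularGroup.S
  have hSA : S.1 * A.1 = (A⁻¹).1 * S.1 := by
    have e : S * A = A⁻¹ * S := by rw [← hS]; group
    have := congrArg Subtype.val e
    rwa [Matrix.SpecialLinearGroup.coe_mul, Matrix.SpecialLinearGroup.coe_mul] at this
  have hRA' : R * (A⁻¹).1 = A.1 * R := by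
    calc R * (A⁻¹).1 = (A.1 * (A⁻¹).1) * R * (A⁻¹).1 := by rw [Ai, Matrix.one_mul]
      _ = A.1 * ((A⁻¹).1 * R) * (A⁻¹).1 := by simp only [Matrix.mul_assoc]
      _ = A.1 * R * (A.1 * (A⁻¹).1) := by rw [← hRA]; simp only [Matrix.mul_assoc]
      _ = A.1 * R := by rw [Ai, Matrix.mul_one]
  obtain ⟨G, hG⟩ : ∃ G : M2Z, G = R * S.1 := ⟨_, rfl⟩
  have hGA : A.1 * G = G * A.1 := by
    rw [hG, Matrix.mul_assoc, hSA, ← Matrix.mul_assoc, ← Matrix.mul_assoc, hRA']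
  have hGd : G.det = -1 := by rw [hG, Matrix.det_mul, hR, S.2]; norm_num
  let G2 : SL(2, ℤ) := ⟨G * G, by rw [Matrix.det_mul, hGd]; norm_num⟩
  have hA' : 2 < |Matrix.trace A.1| := lt_abs.2 (Or.inl hA)
  obtain ⟨n, hn⟩ := central A G2 hA' hpA (by
    apply Subtype.ext
    show A.1 * (G * G) = (G * G) * A.1
    rw [← Matrix.mul_assoc, hGA, Matrix.mul_assoc, hGA, Matrix.mul_assoc])
  have hcomm : ∀ k : ℤ, (A^k).1 * G = G * (A^k).1 := by
    intro k
    have c0 : Commute A.1 G := hGA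
    rcases Int.eq_nat_or_neg k with ⟨m, rfl | rfl⟩
    · rw [zpow_natCast, Matrix.SpecialLinearGroup.coe_pow]; exact (c0.pow_left m).eq
    · have c1 : Commute (A⁻¹).1 G := by
        show (A⁻¹).1 * G = G * (A⁻¹).1
        calc (A⁻¹).1 * G = (A⁻¹).1 * G * (A.1 * (A⁻¹).1) := by rw [Ai, Matrix.mul_one]
          _ = (A⁻¹).1 * (G * A.1) * (A⁻¹).1 := by simp only [Matrix.mul_assoc]
          _ = ((A⁻¹).1 * A.1) * G * (A⁻¹).1 := by rw [← hGA]; simp only [Matrix.mul_assoc]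
          _ = G * (A⁻¹).1 := by rw [Ai', Matrix.one_mul]
      rw [_root_.zpow_neg, zpow_natCast, ← inv_pow, Matrix.SpecialLinearGroup.coe_pow]
      exact (c1.pow_left m).eq
  have hF : ∀ k : ℤ, (G * (A^(-k)).1) * (G * (A^(-k)).1) = (G2 * A^(-(2*k))).1 := by
    intro k
    have : A^(-(2*k)) = A^(-k) * A^(-k) := by rw [← _root_.zpow_add]; congr 1; ring
    rw [this, Matrix.SpecialLinearGroup.coe_mul, Matrix.SpecialLinearGroup.coe_mul]
    show _ = G * G * _
    rw [Matrix.mul_assoc, ← Matrix.mul_assoc (A^(-k)).1, hcomm]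
    simp only [Matrix.mul_assoc]
  have hFd : ∀ k : ℤ, (G * (A^(-k)).1).det = -1 := by
    intro k; rw [Matrix.det_mul, hGd, (A^(-k)).2]; norm_num
  have hFc : ∀ k : ℤ, A.1 * (G * (A^(-k)).1) = (G * (A^(-k)).1) * A.1 := by
    intro k
    have : A.1 * (A^(-k)).1 = (A^(-k)).1 * A.1 := by
      rw [← Matrix.SpecialLinearGroup.coe_mul, ← Matrix.SpecialLinearGroup.coe_mul]
      congr 1; exact ((Commute.refl A).zpow_right _).eq
    rw [← Matrix.mul_assoc, hGA, Matrix.mul_assoc, this, Matrix.mul_assoc]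
  rcases Int.even_or_odd n with ⟨k, hk⟩ | ⟨k, hk⟩
  · exfalso
    refine no_inv A hA' (G * (A^(-k)).1) (hFd k) ?_ (hFc k)
    rw [hF k]
    have e : A^n * A^(-(2*k)) = 1 := by rw [← _root_.zpow_add, hk, show k + k + -(2*k) = 0 by ring, zpow_zero]
    rcases hn with h | h
    · left; rw [h, e]; simp
    · right; rw [h, neg_mul, e]; simp
  · have hF2 := hF k
    have e : A^n * A^(-(2*k)) = A := by rw [← _root_.zpow_add, hk, show 2 * k + 1 + -(2*k) = 1 by ring, zpow_one]
    have hF3 : (G * (A^(-k)).1) * (G * (A^(-k)).1) = A.1 ∨ (G * (A^(-k)).1) * (G * (A^(-k)).1) = -A.1 := by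
      rw [hF2]
      rcases hn with h | h
      · left; rw [h, e]
      · right; rw [h, neg_mul, e]; simp
    have d := hFd k
    obtain ⟨c1, c2, c3⟩ := comm_entries _ _ (hFc k)
    generalize G * (A^(-k)).1 = F at *
    have eF := Matrix.eta_fin_two F
    rw [Matrix.det_fin_two] at d
    rw [Matrix.trace_fin_two] at hA
    have hb : A.1 1 0 ≠ 0 := by
      intro h0
      rw [hsym, h0] at dA
      have : A.1 0 0 * A.1 1 1 = 1 := by linarith
      rcases Int.mul_eq_one_iff_eq_one_or_neg_one.1 this with ⟨h, h'⟩ | ⟨h, h'⟩ <;> rw [h, h'] at hA <;> omega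
    have hFs : F 1 0 = F 0 1 := by
      rw [hsym] at c1
      exact mul_left_cancel₀ hb (by linarith)
    rw [hFs] at eF d
    have hxz : F 0 0 * F 1 1 - (F 0 1)^2 = -1 := by linarith
    have hsq : F * F = (sqA (F 0 0) (F 0 1) (F 1 1)).1 := by
      rw [sqA_val hxz]
      conv_lhs => rw [eF]
      rw [Matrix.mul_fin_two]
      ext i j; fin_cases i <;> fin_cases j <;> simp <;> ring
    have hpos := sqA_tr hxz
    rw [← hsq] at hpos
    have hFA : F * F = A.1 := by
      rcases hF3 with h | h
      · exact h
      · exfalso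
        rw [h, Matrix.trace_neg, Matrix.trace_fin_two] at hpos
        nlinarith [sq_nonneg (F 0 0 + F 1 1)]
    have hAe : A = sqA (F 0 0) (F 0 1) (F 1 1) := by
      apply Subtype.ext; rw [← hsq, hFA]
    have hne : F 0 0 + F 1 1 ≠ 0 := by
      intro h0
      rw [hFA, h0, Matrix.trace_fin_two] at hpos
      omega
    rcases lt_or_gt_of_ne hne with h | h
    · refine ⟨-F 0 0, -F 0 1, -F 1 1, by linarith, by linarith, ?_⟩
      rw [sqA_neg, ← hAe]; exact hcA
    · refine ⟨F 0 0, F 0 1, F 1 1, by linarith, by linarith, ?_⟩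
      rw [← hAe]; exact hcA

theorem isConj_mk_of {A B : SL(2, ℤ)} (P : SL(2, ℤ)) (h : P * A = B * P) :
    IsConj (QuotientGroup.mk A : PSL2Z) (QuotientGroup.mk B) := by
  refine isConj_iff.2 ⟨QuotientGroup.mk P, ?_⟩
  rw [← QuotientGroup.mk_mul, h, QuotientGroup.mk_mul]; group

theorem sqA_conj_swap {x y z : ℤ} (h : x * z - y^2 = -1) :
    IsConj (QuotientGroup.mk (sqA x y z) : PSL2Z) (QuotientGroup.mk (sqA z (-y) x)) := by
  apply isConj_mk_of ModularGroup.S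
  have h' : z * x - (-y)^2 = -1 := by linarith
  apply Subtype.ext
  rw [Matrix.SpecialLinearGroup.coe_mul, Matrix.SpecialLinearGroup.coe_mul, sqA_val h, sqA_val h', S_val]
  ext i j; fin_cases i <;> fin_cases j <;> simp <;> first | ring1 | (left; ring1)

theorem sqA_conj_neg {x y z : ℤ} (h : x * z - y^2 = -1) :
    IsConj (QuotientGroup.mk (sqA x y z) : PSL2Z) (QuotientGroup.mk (sqA x (-y) z)) := by
  apply isConj_mk_of (mkSL x y (-y) (-z) (by linarith))
  have h' : x * z - (-y)^2 = -1 := by linarith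
  apply Subtype.ext
  rw [Matrix.SpecialLinearGroup.coe_mul, Matrix.SpecialLinearGroup.coe_mul, sqA_val h, sqA_val h', mkSL_val]
  ext i j; fin_cases i <;> fin_cases j <;> simp <;> first | ring1 | (left; ring1)

theorem sqA_rec {x y z : ℤ} (h : x * z - y^2 = -1) :
    IsConj (QuotientGroup.mk (sqA x y z) : PSL2Z) (QuotientGroup.mk (sqA x y z))⁻¹ := by
  rw [← QuotientGroup.mk_inv]
  apply isConj_mk_of ModularGroup.S
  apply Subtype.ext
  rw [Matrix.SpecialLinearGroup.coe_mul, Matrix.SpecialLinearGroup.coe_mul, Matrix.SpecialLinearGroup.coe_inv, sqA_val h, S_val]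
  ext i j; fin_cases i <;> fin_cases j <;> simp [Matrix.adjugate_fin_two]

theorem no_sq4 (m t : ℤ) (ht : 0 < t) (h : m * m = t^2 + 4) : False := by
  have h1 : |m|^2 = t^2+4 := by rw [sq_abs]; linarith
  have h2 := abs_nonneg m
  generalize |m| = m at *
  have h3 : t < m := by nlinarith
  have h4 : m < t + 2 := by nlinarith
  have h5 : m = t + 1 := by omega
  subst h5
  have : 2 * t = 3 := by linarith
  omega

theorem quad_pos {α β γ δ : ℤ} (ha : 0 < α) (hb : 0 ≤ β) (hd : α * δ - β * γ = 2)
    (ht : 0 < α * γ + β * δ) : 0 ≤ γ ∧ 0 < δ := by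
  have hg : 0 ≤ γ := by
    by_contra hg
    push Not at hg
    rcases eq_or_lt_of_le hb with h | h
    · rw [← h] at ht; nlinarith
    · have hδ : 0 < δ := by
        by_contra hδ
        push Not at hδ
        nlinarith
      have h1 : 1 ≤ α * δ := by nlinarith
      have h2 : β * (-γ) ≤ 1 := by linarith
      have h3 : β ≤ 1 := by nlinarith
      have h4 : -γ ≤ 1 := by nlinarith
      have h5 : β = 1 := by linarith
      have h6 : γ = -1 := by omega
      subst h5 h6
      have h7 : α * δ = 1 := by linarith
      have h8 : α ≤ 1 := by nlinarith
      have h9 : α = 1 := by linarith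
      subst h9
      linarith
  refine ⟨hg, ?_⟩
  by_contra hδ
  push Not at hδ
  nlinarith [mul_nonneg hb hg]

theorem quad_exists {x y z : ℤ} (h : x * z - y^2 = -1) (ht : 0 < x + z) (hy : 1 ≤ y) :
    ∃ α β γ δ : ℤ, 0 < α ∧ 0 ≤ β ∧ Int.gcd α β = 1 ∧ α * δ - β * γ = 2 ∧ x = α * γ ∧ y = β * γ + 1 ∧ z = β * δ := by
  have hz : 0 ≤ z := by
    by_contra hz
    push Not at hz
    nlinarith
  have hg : 0 < Int.gcd (y+1) z := Int.gcd_pos_of_ne_zero_left _ (by omega)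
  obtain ⟨α, β, hco, hα, hβ⟩ := Int.exists_gcd_one hg
  generalize (Int.gcd (y+1) z) = d at *
  have hd : (0:ℤ) < d := by exact_mod_cast hg
  have ha : 0 < α := by
    by_contra ha
    push Not at ha
    nlinarith
  have hb : 0 ≤ β := by
    by_contra hb
    push Not at hb
    nlinarith
  have h1 : α * (y - 1) = x * β := by
    have : (d:ℤ) * (α * (y-1)) = d * (x * β) := by
      have e1 : (y+1)*(y-1) = x * z := by linarith
      rw [hα, hβ] at e1
      linarith
    exact mul_left_cancel₀ hd.ne' this
  have h2 : α ∣ x := by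
    have : α ∣ x * β := ⟨_, h1.symm⟩
    exact Int.dvd_of_dvd_mul_left_of_gcd_one this hco
  obtain ⟨γ, hγ⟩ := h2
  have h3 : y - 1 = γ * β := by
    apply mul_left_cancel₀ ha.ne'
    rw [h1, hγ]; ring
  refine ⟨α, β, γ, d, ha, hb, hco, ?_, hγ, by linarith, hβ⟩
  linarith

theorem gcd_of_det {α β γ δ : ℤ} (hd : α * δ - β * γ = 2) (hodd : ¬ (2 ∣ γ ∧ 2 ∣ δ)) : Int.gcd δ γ = 1 := by
  have h1 : ((Int.gcd δ γ : ℕ) : ℤ) ∣ 2 := by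
    rw [← hd]
    exact dvd_sub ((Int.gcd_dvd_left _ _).mul_left _) ((Int.gcd_dvd_right _ _).mul_left _)
  have h2 : Int.gcd δ γ ∣ 2 := by exact_mod_cast h1
  rcases (Nat.dvd_prime Nat.prime_two).1 h2 with h | h
  · exact h
  · exfalso; apply hodd
    have e1 := Int.gcd_dvd_left δ γ
    have e2 := Int.gcd_dvd_right δ γ
    rw [h] at e1 e2
    exact ⟨by exact_mod_cast e2, by exact_mod_cast e1⟩

theorem quad_swap {α β γ δ : ℤ} (ha : 0 < α) (hb : 0 ≤ β) (hco : Int.gcd α β = 1) (hd : α * δ - β * γ = 2)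
    (ht : 0 < α * γ + β * δ) (hn : ¬ ncAR α β γ δ) :
    ∃ α' β' γ' δ' : ℤ, 0 < α' ∧ 0 ≤ β' ∧ Int.gcd α' β' = 1 ∧ α' * δ' - β' * γ' = 2 ∧
      α' * γ' = β * δ ∧ β' * γ' = β * γ ∧ β' * δ' = α * γ ∧ ncAR α' β' γ' δ' := by
  obtain ⟨hg, hδ⟩ := quad_pos ha hb hd ht
  unfold ncAR at hn
  split_ifs at hn with hev
  · obtain ⟨⟨γ1, rfl⟩, ⟨δ1, rfl⟩⟩ := hev
    have hd1 : α * δ1 - β * γ1 = 1 := by linarith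
    refine ⟨δ1, γ1, 2 * β, 2 * α, by linarith, by linarith, ?_, by linarith, by ring, by ring, by ring, ?_⟩
    · rw [← Int.isCoprime_iff_gcd_eq_one]
      exact ⟨α, -β, by linarith⟩
    · unfold ncAR
      rw [if_pos ⟨Dvd.intro _ rfl, Dvd.intro _ rfl⟩]
      push Not at hn
      rcases eq_or_lt_of_le hn with h | h
      · exfalso
        have h' : γ1^2 + δ1^2 = α^2 + β^2 := by linarith
        have e : (α^2+β^2) * (γ1^2+δ1^2) = (α*γ1+β*δ1)^2 + 1 := by
          linear_combination (α * δ1 - β * γ1 + 1) * hd1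
        rw [h'] at e
        exact no_sq4 (2 * (α^2+β^2)) (2 * (α*γ1+β*δ1)) (by linarith) (by linarith)
      · linarith
  · have hco' := gcd_of_det hd hev
    refine ⟨δ, γ, β, α, hδ, hg, hco', by linarith, by ring, by ring, by ring, ?_⟩
    unfold ncAR
    have hne : ¬ (2 ∣ β ∧ 2 ∣ α) := by
      rintro ⟨h1, h2⟩
      have := Int.dvd_coe_gcd h2 h1
      rw [hco] at this
      omega
    rw [if_neg hne]
    push Not at hn
    rcases eq_or_lt_of_le hn with h | h
    · exfalso
      have e : (α^2+β^2) * (γ^2+δ^2) = (α*γ+β*δ)^2 + 4 := by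
        linear_combination (α * δ - β * γ + 2) * hd
      rw [h] at e
      exact no_sq4 (α^2+β^2) _ ht e
    · linarith

noncomputable def sqP (p : (ℤ × ℤ) × (ℤ × ℤ)) : SL(2, ℤ) :=
  sqA (p.1.1 * p.2.1) (p.1.2 * p.2.1 + 1) (p.1.2 * p.2.2)

theorem exists_PAR {x y z : ℤ} (h : x * z - y^2 = -1) (ht : 0 < x + z) (K : ℕ) (hK : x + z ≤ K) :
    ∃ p ∈ PAR K, IsConj (QuotientGroup.mk (sqA x y z) : PSL2Z) (QuotientGroup.mk (sqP p)) := by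
  have main : ∀ y : ℤ, x * z - y^2 = -1 → 1 ≤ y →
      ∃ p ∈ PAR K, IsConj (QuotientGroup.mk (sqA x y z) : PSL2Z) (QuotientGroup.mk (sqP p)) := by
    intro y h hy
    obtain ⟨α, β, γ, δ, ha, hb, hco, hd, hx, hy', hz⟩ := quad_exists h ht hy
    by_cases hn : ncAR α β γ δ
    · refine ⟨((α, β), (γ, δ)), (mem_PAR _ _).2 ⟨ha, hb, hco, hd, ?_, ?_, hn⟩, ?_⟩
      · show 0 < α * γ + β * δ
        linarith
      · show α * γ + β * δ ≤ _
        linarith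
      · unfold sqP
        simp only
        rw [← hx, ← hy', ← hz]
    · obtain ⟨α', β', γ', δ', ha', hb', hco', hd', e1, e2, e3, hn'⟩ := quad_swap ha hb hco hd (by linarith) hn
      refine ⟨((α', β'), (γ', δ')), (mem_PAR _ _).2 ⟨ha', hb', hco', hd', ?_, ?_, hn'⟩, ?_⟩
      · show 0 < α' * γ' + β' * δ'
        linarith
      · show α' * γ' + β' * δ' ≤ _
        linarith
      · unfold sqP
        simp only
        rw [e1, e2, e3, ← hx, ← hy', ← hz]
        have h' : z * x - (-y)^2 = -1 := by linarith
        have := sqA_conj_neg h'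
        rw [neg_neg] at this
        exact (sqA_conj_swap h).trans this
  rcases lt_trichotomy y 0 with hy | hy | hy
  · obtain ⟨p, hp, hc⟩ := main (-y) (by linarith) (by linarith)
    exact ⟨p, hp, (sqA_conj_neg h).trans hc⟩
  · exfalso
    subst hy
    have h' : x * z = -1 := by linarith
    rcases Int.mul_eq_neg_one_iff_eq_one_or_neg_one.1 h' with ⟨h3, h4⟩ | ⟨h3, h4⟩ <;> omega
  · exact main y h (by linarith)

def IsQuad (p : (ℤ × ℤ) × (ℤ × ℤ)) : Prop :=
  0 < p.1.1 ∧ 0 ≤ p.1.2 ∧ Int.gcd p.1.1 p.1.2 = 1 ∧ p.1.1 * p.2.2 - p.1.2 * p.2.1 = 2 ∧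
    0 < p.1.1 * p.2.1 + p.1.2 * p.2.2

theorem quad_inj {α β γ δ α' β' γ' δ' : ℤ} (h : IsQuad ((α, β), (γ, δ))) (h' : IsQuad ((α', β'), (γ', δ')))
    (h1 : α * γ = α' * γ') (h2 : β * γ = β' * γ') (h3 : β * δ = β' * δ') :
    α = α' ∧ β = β' ∧ γ = γ' ∧ δ = δ' := by
  obtain ⟨a, b, c, d, e⟩ := h
  obtain ⟨a', b', c', d', e'⟩ := h'
  simp only at *
  have hδ := (quad_pos a b d e).2
  have hδ' := (quad_pos a' b' d' e').2
  have h4 : α * δ = α' * δ' := by linarith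
  have h5 : Int.gcd (α * δ) (β * δ) = δ.natAbs := by rw [Int.gcd_mul_right, c, one_mul]
  have h6 : Int.gcd (α' * δ') (β' * δ') = δ'.natAbs := by rw [Int.gcd_mul_right, c', one_mul]
  have h7 : δ = δ' := by rw [h4, h3, h6] at h5; omega
  subst h7
  have h8 : α = α' := mul_right_cancel₀ hδ.ne' h4
  subst h8
  exact ⟨rfl, mul_right_cancel₀ hδ.ne' h3, mul_left_cancel₀ a.ne' h1, rfl⟩

theorem quad_noswap {α β γ δ α' β' γ' δ' : ℤ} (h : IsQuad ((α, β), (γ, δ))) (h' : IsQuad ((α', β'), (γ', δ')))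
    (hn : ncAR α β γ δ) (hn' : ncAR α' β' γ' δ')
    (h1 : α * γ = β' * δ') (h2 : β * γ = β' * γ') (h3 : β * δ = α' * γ') : False := by
  obtain ⟨a, b, c, d, e⟩ := h
  simp only at *
  obtain ⟨hγ, hδ⟩ := quad_pos a b d e
  unfold ncAR at hn
  split_ifs at hn with hev
  · obtain ⟨⟨γ1, rfl⟩, ⟨δ1, rfl⟩⟩ := hev
    have hd1 : α * δ1 - β * γ1 = 1 := by linarith
    have hq : IsQuad ((δ1, γ1), (2 * β, 2 * α)) := by
      refine ⟨by show 0 < δ1; linarith, by show 0 ≤ γ1; linarith, ?_, by show δ1 * (2*α) - γ1 * (2*β) = 2; linarith,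
        by show 0 < δ1 * (2 * β) + γ1 * (2 * α); linarith⟩
      show Int.gcd δ1 γ1 = 1
      rw [← Int.isCoprime_iff_gcd_eq_one]
      exact ⟨α, -β, by linarith⟩
    obtain ⟨rfl, rfl, rfl, rfl⟩ := quad_inj h' hq (by linarith) (by linarith) (by linarith)
    unfold ncAR at hn'
    rw [if_pos ⟨Dvd.intro _ rfl, Dvd.intro _ rfl⟩] at hn'
    linarith
  · have hco' := gcd_of_det d hev
    have hq : IsQuad ((δ, γ), (β, α)) :=
      ⟨hδ, hγ, hco', by show δ * α - γ * β = 2; linarith, by show 0 < δ * β + γ * α; linarith⟩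
    obtain ⟨rfl, rfl, rfl, rfl⟩ := quad_inj h' hq (by linarith) (by linarith) (by linarith)
    unfold ncAR at hn'
    split_ifs at hn' <;> nlinarith

theorem gM_sq {x y z : ℤ} (h : x * z - y^2 = -1) :
    (sqA x y z).1 = (x + z) • !![x, y; y, z] + (1 : M2Z) := by
  rw [sqA_val h]
  ext i j; fin_cases i <;> fin_cases j <;> simp <;> linarith

theorem gM_mul {x y z : ℤ} (h : x * z - y^2 = -1) :
    (sqA x y z).1 = !![x, y; y, z] * !![x, y; y, z] := by
  rw [sqA_val h]
  ext i j; fin_cases i <;> fin_cases j <;> simp <;> ring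

theorem orth_cases {x y z x' y' z' : ℤ} (Q : M2Z) (hQ : Qᵀ * Q = 1)
    (h : Q * !![x, y; y, z] = !![x', y'; y', z'] * Q) :
    (x' = x ∧ z' = z ∨ x' = z ∧ z' = x) ∧ (y' = y ∨ y' = -y) := by
  have q00 := congrFun (congrFun hQ 0) 0
  have q01 := congrFun (congrFun hQ 0) 1
  have q11 := congrFun (congrFun hQ 1) 1
  have h00 := congrFun (congrFun h 0) 0
  have h01 := congrFun (congrFun h 0) 1
  have h10 := congrFun (congrFun h 1) 0
  have h11 := congrFun (congrFun h 1) 1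
  simp only [Matrix.mul_apply, Fin.sum_univ_two, Matrix.transpose_apply] at *
  simp at *
  generalize Q 0 0 = a at *
  generalize Q 0 1 = b at *
  generalize Q 1 0 = c at *
  generalize Q 1 1 = d at *
  have hc : c = 0 ∨ c = 1 ∨ c = -1 := by
    have : c ≤ 1 := by nlinarith
    have : -1 ≤ c := by nlinarith
    omega
  have ha : a = 0 ∨ a = 1 ∨ a = -1 := by
    have : a ≤ 1 := by nlinarith
    have : -1 ≤ a := by nlinarith
    omega
  have hd : d = 0 ∨ d = 1 ∨ d = -1 := by
    have : d ≤ 1 := by nlinarith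
    have : -1 ≤ d := by nlinarith
    omega
  have hb : b = 0 ∨ b = 1 ∨ b = -1 := by
    have : b ≤ 1 := by nlinarith
    have : -1 ≤ b := by nlinarith
    omega
  rcases ha with rfl | rfl | rfl <;> rcases hb with rfl | rfl | rfl <;>
    rcases hc with rfl | rfl | rfl <;> rcases hd with rfl | rfl | rfl <;> omega

theorem XYX_pow {X Y : M2Z} (hc : Commute X Y) (h : X * Y * X = 1) (k : ℕ) : X^k * Y^k * X^k = 1 := by
  rw [← hc.mul_pow, ← (show Commute (X * Y) X from (Commute.refl X).mul_left hc.symm).mul_pow, h, one_pow]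

theorem sqA_inj {x y z x' y' z' : ℤ} (h : x * z - y^2 = -1) (h' : x' * z' - y'^2 = -1) (ht : 0 < x + z)
    (ht' : 0 < x' + z') (hp : IsPrim (QuotientGroup.mk (sqA x y z)))
    (hc : IsConj (QuotientGroup.mk (sqA x y z) : PSL2Z) (QuotientGroup.mk (sqA x' y' z'))) :
    (x' = x ∧ z' = z ∨ x' = z ∧ z' = x) ∧ (y' = y ∨ y' = -y) := by
  obtain ⟨c, hc⟩ := isConj_iff.1 hc
  obtain ⟨P, rfl⟩ := QuotientGroup.mk_surjective c
  have hP := conj_pos _ _ P (by rw [sqA_tr h]; positivity) (by rw [sqA_tr h']; positivity) hc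
  have htr : x' + z' = x + z := by
    have := trace_conj P (sqA x y z)
    rw [hP, sqA_tr h, sqA_tr h'] at this
    nlinarith
  have e2 := gM_mul h
  have hPA : P.1 * (sqA x y z).1 = (sqA x' y' z').1 * P.1 := by
    have e : P * sqA x y z = sqA x' y' z' * P := by rw [← hP]; group
    have := congrArg Subtype.val e
    rwa [Matrix.SpecialLinearGroup.coe_mul, Matrix.SpecialLinearGroup.coe_mul] at this
  have hPG : P.1 * !![x, y; y, z] = !![x', y'; y', z'] * P.1 := by
    rw [gM_sq h, gM_sq h', htr, Matrix.mul_add, Matrix.add_mul, Matrix.mul_one, Matrix.one_mul,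
      add_left_inj, Matrix.mul_smul, Matrix.smul_mul] at hPA
    exact smul_right_injective _ ht.ne' hPA
  have hA2 : 2 < |Matrix.trace (sqA x y z).1| := by
    rw [sqA_tr h]; apply lt_abs.2; left; have : 0 < (x+z)^2 := by positivity
    linarith
  obtain ⟨A, hA⟩ : ∃ A, A = sqA x y z := ⟨_, rfl⟩
  rw [← hA] at e2 hp hA2
  have e1 := gM_sq h
  rw [← hA] at e1
  obtain ⟨G, hG⟩ : ∃ G, G = !![x, y; y, z] := ⟨_, rfl⟩
  have hGt : Gᵀ = G := by
    rw [hG]; ext i j; fin_cases i <;> fin_cases j <;> rfl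
  obtain ⟨G2, hG2⟩ : ∃ G, G = !![x', y'; y', z'] := ⟨_, rfl⟩
  have hG2t : G2ᵀ = G2 := by
    rw [hG2]; ext i j; fin_cases i <;> fin_cases j <;> rfl
  obtain ⟨F, hF⟩ : ∃ F, F = !![-z, y; y, -x] := ⟨_, rfl⟩
  have hFt : Fᵀ = F := by
    rw [hF]; ext i j; fin_cases i <;> fin_cases j <;> rfl
  have hGF : G * F = 1 := by
    rw [hG, hF]; ext i j; fin_cases i <;> fin_cases j <;> simp <;> linarith
  have hFG : F * G = 1 := by
    rw [hG, hF]; ext i j; fin_cases i <;> fin_cases j <;> simp <;> linarith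
  rw [← hG] at e1 e2
  rw [← hG, ← hG2] at hPG
  have hPG' : G * P.1ᵀ = P.1ᵀ * G2 := by
    have := congrArg Matrix.transpose hPG
    rwa [Matrix.transpose_mul, Matrix.transpose_mul, hGt, hG2t] at this
  let M : SL(2, ℤ) := ⟨P.1ᵀ * P.1, by rw [Matrix.det_mul, Matrix.det_transpose, P.2]; norm_num⟩
  have hMG : (P.1ᵀ * P.1) * G = G * (P.1ᵀ * P.1) := by
    rw [Matrix.mul_assoc, hPG, ← Matrix.mul_assoc, ← hPG', Matrix.mul_assoc]
  obtain ⟨n, hn⟩ := central A M hA2 hp (by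
    apply Subtype.ext
    show A.1 * (P.1ᵀ * P.1) = (P.1ᵀ * P.1) * A.1
    have c0 : Commute (P.1ᵀ * P.1) G := hMG
    rw [e2]
    exact (c0.mul_right c0).eq.symm)
  have hE : ∃ E : M2Z, Eᵀ = E ∧ E * G = G * E ∧ E * (A^n).1 * E = 1 := by
    have cGF : Commute F G := by show F * G = G * F; rw [hGF, hFG]
    rcases Int.eq_nat_or_neg n with ⟨m, rfl | rfl⟩
    · refine ⟨F^m, by rw [Matrix.transpose_pow, hFt], (cGF.pow_left m).eq, ?_⟩
      rw [zpow_natCast, Matrix.SpecialLinearGroup.coe_pow]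
      apply XYX_pow
      · rw [e2]; exact cGF.mul_right cGF
      · rw [e2, ← Matrix.mul_assoc, hFG, Matrix.one_mul, hGF]
    · refine ⟨G^m, by rw [Matrix.transpose_pow, hGt], ((Commute.refl G).pow_left m).eq, ?_⟩
      have ei : (A⁻¹).1 = F * F := by
        have k1 : (A⁻¹).1 * A.1 = 1 := by rw [← Matrix.SpecialLinearGroup.coe_mul]; simp
        calc (A⁻¹).1 = (A⁻¹).1 * (G * (G * F) * F) := by rw [hGF, Matrix.mul_one, hGF, Matrix.mul_one]
          _ = ((A⁻¹).1 * (G * G)) * (F * F) := by simp only [Matrix.mul_assoc]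
          _ = F * F := by rw [← e2, k1, Matrix.one_mul]
      rw [_root_.zpow_neg, zpow_natCast, ← inv_pow, Matrix.SpecialLinearGroup.coe_pow]
      apply XYX_pow
      · rw [ei]; exact cGF.symm.mul_right cGF.symm
      · rw [ei, ← Matrix.mul_assoc, hGF, Matrix.one_mul, hFG]
  obtain ⟨E, hEt, hEG, hE1⟩ := hE
  have hQ : (P.1 * E)ᵀ * (P.1 * E) = E * M.1 * E := by
    rw [Matrix.transpose_mul, hEt]
    show _ = E * (P.1ᵀ * P.1) * E
    simp only [Matrix.mul_assoc]
  have hQ1 : (P.1 * E)ᵀ * (P.1 * E) = 1 := by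
    rcases hn with h | h
    · rw [hQ, h, hE1]
    · exfalso
      rw [h, Matrix.SpecialLinearGroup.coe_neg, Matrix.mul_neg, Matrix.neg_mul, hE1] at hQ
      have := congrFun (congrFun hQ 0) 0
      simp only [Matrix.mul_apply, Fin.sum_univ_two, Matrix.transpose_apply, Matrix.neg_apply, Matrix.one_apply_eq] at this
      nlinarith
  rw [hG] at hPG hEG
  rw [hG2] at hPG
  apply orth_cases (P.1 * E) hQ1
  rw [Matrix.mul_assoc, hEG, ← Matrix.mul_assoc, hPG, Matrix.mul_assoc]

theorem sqP_det {p : (ℤ × ℤ) × (ℤ × ℤ)} (hp : IsQuad p) :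
    (p.1.1 * p.2.1) * (p.1.2 * p.2.2) - (p.1.2 * p.2.1 + 1)^2 = -1 := by
  have := hp.2.2.2.1
  linear_combination (p.1.2 * p.2.1) * this

theorem PAR_quad {K : ℕ} {p : (ℤ × ℤ) × (ℤ × ℤ)} (hp : p ∈ PAR K) : IsQuad p ∧ ncAR p.1.1 p.1.2 p.2.1 p.2.2 ∧
    p.1.1 * p.2.1 + p.1.2 * p.2.2 ≤ K := by
  obtain ⟨a, b, c, d, e, f, g⟩ := (mem_PAR K p).1 hp
  exact ⟨⟨a, b, c, d, e⟩, g, f⟩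

theorem PAR_inj {K : ℕ} {p q : (ℤ × ℤ) × (ℤ × ℤ)} (hp : p ∈ PAR K) (hq : q ∈ PAR K)
    (hprim : IsPrim (QuotientGroup.mk (sqP p)))
    (hc : IsConj (QuotientGroup.mk (sqP p) : PSL2Z) (QuotientGroup.mk (sqP q))) : p = q := by
  obtain ⟨p1, p2, -⟩ := PAR_quad hp
  obtain ⟨q1, q2, -⟩ := PAR_quad hq
  obtain ⟨hor, hy⟩ := sqA_inj (sqP_det p1) (sqP_det q1) p1.2.2.2.2 q1.2.2.2.2 hprim hc
  obtain ⟨⟨α, β⟩, ⟨γ, δ⟩⟩ := p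
  obtain ⟨⟨α', β'⟩, ⟨γ', δ'⟩⟩ := q
  simp only at *
  have hy' : β' * γ' = β * γ := by
    have k1 := mul_nonneg p1.2.1 (quad_pos p1.1 p1.2.1 p1.2.2.2.1 p1.2.2.2.2).1
    have k2 := mul_nonneg q1.2.1 (quad_pos q1.1 q1.2.1 q1.2.2.2.1 q1.2.2.2.2).1
    simp only at k1 k2
    rcases hy with h | h
    · linarith
    · linarith
  rcases hor with ⟨h1, h2⟩ | ⟨h1, h2⟩
  · obtain ⟨rfl, rfl, rfl, rfl⟩ := quad_inj p1 q1 h1.symm hy'.symm h2.symm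
    rfl
  · exact (quad_noswap p1 q1 p2 q2 h2.symm hy'.symm h1.symm).elim

theorem amb1_of (B : SL(2, ℤ)) (h : B.1 0 0 = B.1 1 1) : Amb1 B := by
  left
  have hW : Wmat⁻¹ = Wmat := by
    apply Matrix.inv_eq_right_inv
    rw [Wmat]; ext i j; fin_cases i <;> fin_cases j <;> simp
  rw [hW, Matrix.SpecialLinearGroup.coe_inv, Matrix.adjugate_fin_two, Wmat]
  ext i j
  fin_cases i <;> fin_cases j <;> simp only [Matrix.mul_apply, Fin.sum_univ_two] <;> simp [h]

theorem amb2_of (B : SL(2, ℤ)) (h : B.1 1 1 = B.1 0 0 + B.1 0 1) : Amb2 B := by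
  left
  have hW : W1mat⁻¹ = W1mat := by
    apply Matrix.inv_eq_right_inv
    rw [W1mat]; ext i j; fin_cases i <;> fin_cases j <;> simp
  rw [hW, Matrix.SpecialLinearGroup.coe_inv, Matrix.adjugate_fin_two, W1mat]
  ext i j
  fin_cases i <;> fin_cases j <;> simp only [Matrix.mul_apply, Fin.sum_univ_two] <;> simp [h]

theorem conj_entries (a b c d p q r s : ℤ) (h : a * d - b * c = 1) (A : SL(2, ℤ)) (hA : A.1 = !![p, q; r, s]) :
    (mkSL a b c d h * A * (mkSL a b c d h)⁻¹).1 =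
      !![(a*p+b*r)*d - (a*q+b*s)*c, -(a*p+b*r)*b+(a*q+b*s)*a;
         (c*p+d*r)*d - (c*q+d*s)*c, -(c*p+d*r)*b+(c*q+d*s)*a] := by
  rw [Matrix.SpecialLinearGroup.coe_mul, Matrix.SpecialLinearGroup.coe_mul,
    Matrix.SpecialLinearGroup.coe_inv, mkSL_val, Matrix.adjugate_fin_two_of, hA]
  ext i j; fin_cases i <;> fin_cases j <;> simp <;> ring

theorem quad_amb {p : (ℤ × ℤ) × (ℤ × ℤ)} (hp : IsQuad p) :
    ∃ δ : PSL2Z, IsConj (QuotientGroup.mk (sqP p)) δ ∧ (AmbFst δ ∨ AmbSnd δ) := by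
  have hdet := sqP_det hp
  obtain ⟨⟨α, β⟩, ⟨γ, δ⟩⟩ := p
  obtain ⟨h1, h2, h3, h4, h5⟩ := hp
  unfold sqP
  simp only at *
  have key : ∀ P : SL(2, ℤ), (Amb1 (P * sqA (α * γ) (β * γ + 1) (β * δ) * P⁻¹) ∨
      Amb2 (P * sqA (α * γ) (β * γ + 1) (β * δ) * P⁻¹)) →
      ∃ δ_1 : PSL2Z, IsConj (QuotientGroup.mk (sqA (α * γ) (β * γ + 1) (β * δ))) δ_1 ∧ (AmbFst δ_1 ∨ AmbSnd δ_1) := by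
    intro P hP
    refine ⟨QuotientGroup.mk (P * sqA (α * γ) (β * γ + 1) (β * δ) * P⁻¹), isConj_mk_of P (by group), ?_⟩
    rcases hP with h | h
    · left; exact ⟨_, rfl, h⟩
    · right; exact ⟨_, rfl, h⟩
  by_cases hev : 2 ∣ γ ∧ 2 ∣ δ
  · obtain ⟨⟨γ1, rfl⟩, ⟨δ1, rfl⟩⟩ := hev
    have hd1 : α * δ1 - β * γ1 = 1 := by linarith
    apply key (mkSL α β γ1 δ1 hd1)
    left
    apply amb1_of
    rw [conj_entries _ _ _ _ _ _ _ _ hd1 _ (sqA_val hdet)]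
    have hy : β * (2 * γ1) + 1 = α * δ1 + β * γ1 := by linarith
    rw [hy]
    simp
    ring
  · have hpar : (∃ e1, α = 2 * e1 + γ) ∧ (∃ e2, β = 2 * e2 + δ) := by
      have hu : ¬ (2 ∣ α ∧ 2 ∣ β) := by
        rintro ⟨k1, k2⟩
        have := Int.dvd_coe_gcd k1 k2
        rw [h3] at this
        omega
      have m4 : (α * δ - β * γ) % 2 = 0 := by rw [h4]; rfl
      rcases Int.emod_two_eq_zero_or_one α with a1 | a1 <;> rcases Int.emod_two_eq_zero_or_one β with b1 | b1 <;>
      rcases Int.emod_two_eq_zero_or_one γ with c1 | c1 <;> rcases Int.emod_two_eq_zero_or_one δ with d1 | d1 <;>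
      first
      | (exfalso; rw [Int.sub_emod, Int.mul_emod, Int.mul_emod β, a1, b1, c1, d1] at m4; omega)
      | exact ⟨⟨(α - γ) / 2, by omega⟩, ⟨(β - δ) / 2, by omega⟩⟩
      | (exfalso; omega)
    obtain ⟨⟨e1, rfl⟩, ⟨e2, rfl⟩⟩ := hpar
    have hd1 : e1 * δ - e2 * γ = 1 := by linarith
    have hd2 : (-γ) * e2 - (-δ) * e1 = 1 := by linarith
    apply key (mkSL (-γ) (-δ) e1 e2 hd2)
    right
    apply amb2_of
    rw [conj_entries _ _ _ _ _ _ _ _ hd2 _ (sqA_val hdet)]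
    have hy : (2 * e2 + δ) * γ + 1 = e2 * γ + δ * γ + e1 * δ := by linarith
    rw [hy]
    simp
    ring

theorem sqP_tr {p : (ℤ × ℤ) × (ℤ × ℤ)} (hp : IsQuad p) :
    Matrix.trace (sqP p).1 = (p.1.1 * p.2.1 + p.1.2 * p.2.2)^2 + 2 := sqA_tr (sqP_det hp)

theorem sqP_hyp {p : (ℤ × ℤ) × (ℤ × ℤ)} (hp : IsQuad p) : IsHyp (QuotientGroup.mk (sqP p)) := by
  refine ⟨_, rfl, ?_⟩
  rw [sqP_tr hp]
  have : 0 < (p.1.1 * p.2.1 + p.1.2 * p.2.2)^2 := by have := hp.2.2.2.2; positivity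
  apply lt_abs.2; left; linarith

theorem rec_growth (τ : ℤ) (hτ : 1 ≤ τ) (t : ℕ → ℤ) (h0 : t 0 = 2) (h1 : t 1 = τ)
    (hr : ∀ k, t (k+2) = τ * t (k+1) + t k) (j : ℕ) :
    2^j ≤ t (2*j+1) ∧ t (2*j+1) ≤ t (2*j+2) ∧ (1 ≤ j → τ^3 ≤ t (2*j+1)) := by
  have h2 : t 2 = τ^2 + 2 := by rw [hr 0]; simp only [zero_add]; rw [h1, h0]; ring
  induction j with
  | zero =>
    refine ⟨by simpa [h1] using hτ, ?_, by omega⟩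
    simp only [mul_zero, zero_add]; rw [h1, h2]; nlinarith
  | succ j ih =>
    obtain ⟨a, b, c⟩ := ih
    have e1 : t (2*(j+1)+1) = τ * t (2*j+2) + t (2*j+1) := hr (2*j+1)
    have e2 : t (2*(j+1)+2) = τ * t (2*(j+1)+1) + t (2*j+2) := hr (2*j+2)
    have p0 : (0:ℤ) < 2^j := by positivity
    have p1 : t (2*j+2) ≤ τ * t (2*j+2) := by nlinarith
    have p2 : t (2*(j+1)+1) ≤ τ * t (2*(j+1)+1) := by nlinarith
    refine ⟨?_, by linarith, fun _ => ?_⟩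
    · rw [pow_succ]; linarith
    · rcases Nat.eq_zero_or_pos j with h | h
      · subst h
        simp only [mul_zero, zero_add, mul_one] at *
        rw [e1, h1, h2]; nlinarith
      · have := c h; linarith

theorem tr_rec {x y z : ℤ} (h : x * z - y^2 = -1) (k : ℕ) :
    Matrix.trace ((!![x, y; y, z] : M2Z)^(k+2)) =
      (x+z) * Matrix.trace ((!![x, y; y, z] : M2Z)^(k+1)) + Matrix.trace ((!![x, y; y, z] : M2Z)^k) := by
  have e : (!![x, y; y, z] : M2Z)^2 = (x+z) • !![x, y; y, z] + 1 := by
    rw [pow_two, ← gM_mul h, gM_sq h]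
  rw [pow_add, e, Matrix.mul_add, Matrix.mul_smul, ← pow_succ, Matrix.mul_one, Matrix.trace_add, Matrix.trace_smul,
    smul_eq_mul]

theorem imprim {x y z : ℤ} (h : x * z - y^2 = -1) (ht : 0 < x + z)
    (hp : ¬ IsPrim (QuotientGroup.mk (sqA x y z))) :
    ∃ (x0 y0 z0 : ℤ) (j : ℕ), 1 ≤ j ∧ x0 * z0 - y0^2 = -1 ∧ 0 < x0 + z0 ∧
      (!![x, y; y, z] : M2Z) = (!![x0, y0; y0, z0] : M2Z) ^ (2*j+1) := by
  unfold IsPrim at hp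
  push Not at hp
  obtain ⟨d, n, hn, hd⟩ := hp
  obtain ⟨D, rfl⟩ := QuotientGroup.mk_surjective d
  rw [← QuotientGroup.mk_pow, mk_eq_iff] at hd
  have e1 := gM_sq h
  have e2 := gM_mul h
  have hA2 : 2 < |Matrix.trace (sqA x y z).1| := by
    rw [sqA_tr h]; apply lt_abs.2; left; have : 0 < (x+z)^2 := by positivity
    linarith
  have hsymA : (sqA x y z).1 0 1 = y * (x+z) ∧ (sqA x y z).1 1 0 = y * (x+z) := by rw [sqA_val h]; simp
  obtain ⟨A, hA⟩ : ∃ A, A = sqA x y z := ⟨_, rfl⟩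
  rw [← hA] at e1 e2 hA2 hd hsymA
  obtain ⟨G, hG⟩ : ∃ G, G = !![x, y; y, z] := ⟨_, rfl⟩
  have hGd : G.det = -1 := by rw [hG, Matrix.det_fin_two_of]; linarith
  rw [← hG] at e1 e2
  have hGtr : Matrix.trace G = x + z := by rw [hG, Matrix.trace_fin_two_of]
  have hAD : A.1 = D.1^n ∨ A.1 = -D.1^n := by
    rcases hd with h | h
    · left; rw [h, Matrix.SpecialLinearGroup.coe_pow]
    · right; rw [h, Matrix.SpecialLinearGroup.coe_neg, Matrix.SpecialLinearGroup.coe_pow]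
  obtain ⟨s, hs, hsA⟩ : ∃ s : ℤ, (s = 1 ∨ s = -1) ∧ A.1 = s • D.1^n := by
    rcases hAD with h | h
    · exact ⟨1, Or.inl rfl, by rw [one_smul]; exact h⟩
    · exact ⟨-1, Or.inr rfl, by rw [neg_smul, one_smul]; exact h⟩
  have hss : s * s = 1 := by rcases hs with h | h <;> rw [h] <;> rfl
  have cDA : Commute D.1 A.1 := by
    rw [hsA]; exact ((Commute.refl D.1).pow_right n).smul_right s
  have cDG : Commute D.1 G := by
    have : D.1 * A.1 = A.1 * D.1 := cDA
    rw [e1, Matrix.mul_add, Matrix.add_mul, Matrix.mul_one, Matrix.one_mul,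
      add_left_inj, Matrix.mul_smul, Matrix.smul_mul] at this
    exact smul_right_injective _ ht.ne' this
  obtain ⟨E, hE⟩ : ∃ E, E = (D⁻¹).1 := ⟨_, rfl⟩
  have hED : E * D.1 = 1 := by rw [hE, ← Matrix.SpecialLinearGroup.coe_mul]; simp
  have hDE : D.1 * E = 1 := by rw [hE, ← Matrix.SpecialLinearGroup.coe_mul]; simp
  have hEd : E.det = 1 := by rw [hE]; exact (D⁻¹).2
  have cED : Commute E D.1 := by show _ = _; rw [hED, hDE]
  have cEG : Commute E G := by
    show E * G = G * E
    calc E * G = E * (G * D.1) * E := by rw [Matrix.mul_assoc, Matrix.mul_assoc, hDE, Matrix.mul_one]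
      _ = (E * D.1) * G * E := by rw [← cDG.eq]; simp only [Matrix.mul_assoc]
      _ = G * E := by rw [hED, Matrix.one_mul]
  have hDEp : ∀ k : ℕ, D.1^k * E^k = 1 := by
    intro k; rw [← cED.symm.mul_pow, hDE, one_pow]
  have cEA : Commute E A.1 := by rw [e2]; exact cEG.mul_right cEG
  have cGA : Commute G A.1 := by rw [e2]; exact (Commute.refl G).mul_right (Commute.refl G)
  have cF : ∀ k : ℕ, A.1 * (G * E^k) = (G * E^k) * A.1 := by
    intro k
    exact (cGA.mul_left (cEA.pow_left k)).eq.symm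
  have dF : ∀ k : ℕ, (G * E^k).det = -1 := by
    intro k; rw [Matrix.det_mul, Matrix.det_pow, hGd, hEd]; simp
  have sF : ∀ k : ℕ, (G * E^k) * (G * E^k) = A.1 * E^(2*k) := by
    intro k
    rw [e2, two_mul, pow_add, ← Matrix.mul_assoc, Matrix.mul_assoc G, (cEG.pow_left k).eq]
    simp only [Matrix.mul_assoc]
  rcases Nat.even_or_odd' n with ⟨k, hk | hk⟩
  · exfalso
    refine no_inv A hA2 (G * E^k) (dF k) ?_ (cF k)
    rw [sF, hsA, hk, Matrix.smul_mul, hDEp]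
    rcases hs with h | h
    · left; rw [h, one_smul]
    · right; rw [h, neg_smul, one_smul]
  · have hk1 : 1 ≤ k := by omega
    have c0 := cF k
    have d0 := dF k
    have hpow : (G * E^k)^n = s^k • G := by
      have cGE : Commute G (E^k) := (cEG.pow_left k).symm
      have g1 : G^n = G * A.1^k := by rw [hk, pow_succ', pow_mul, pow_two, ← e2]
      have g2 : A.1^k = s^k • D.1^(n*k) := by rw [hsA, smul_pow, pow_mul]
      rw [cGE.mul_pow, g1, g2, ← pow_mul, mul_comm k n, Matrix.mul_smul, Matrix.smul_mul, Matrix.mul_assoc,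
        hDEp, Matrix.mul_one]
    obtain ⟨F, hF⟩ : ∃ F, F = G * E^k := ⟨_, rfl⟩
    rw [← hF] at c0 d0 hpow
    obtain ⟨c1, -, -⟩ := comm_entries _ _ c0
    rw [hsymA.1, hsymA.2] at c1
    have hy : y ≠ 0 := by
      rintro rfl
      have h' : x * z = -1 := by linarith
      rcases Int.mul_eq_neg_one_iff_eq_one_or_neg_one.1 h' with ⟨h3, h4⟩ | ⟨h3, h4⟩ <;> omega
    have hFs : F 1 0 = F 0 1 := mul_left_cancel₀ (mul_ne_zero hy ht.ne') (by linarith)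
    have eF := Matrix.eta_fin_two F
    rw [Matrix.det_fin_two] at d0
    rw [hFs] at eF d0
    obtain ⟨x0, hx0⟩ : ∃ a, a = F 0 0 := ⟨_, rfl⟩
    obtain ⟨y0, hy0⟩ : ∃ a, a = F 0 1 := ⟨_, rfl⟩
    obtain ⟨z0, hz0⟩ : ∃ a, a = F 1 1 := ⟨_, rfl⟩
    rw [← hx0, ← hy0, ← hz0] at eF d0
    have hdet : x0 * z0 - y0^2 = -1 := by linarith
    have hne : x0 + z0 ≠ 0 := by
      intro h0
      have dd := dF k
      rw [← hF] at dd
      refine no_inv A hA2 F dd (Or.inl ?_) c0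
      rw [eF, ← gM_mul hdet, gM_sq hdet, h0]; simp
    have fin : ∀ (x0 y0 z0 : ℤ), x0 * z0 - y0^2 = -1 → 0 < x0 + z0 → (∃ e : ℤ, (e = 1 ∨ e = -1) ∧
        (!![x0, y0; y0, z0] : M2Z) ^ n = e • G) → 
        ∃ (x0 y0 z0 : ℤ) (j : ℕ), 1 ≤ j ∧ x0 * z0 - y0^2 = -1 ∧ 0 < x0 + z0 ∧
        (!![x, y; y, z] : M2Z) = (!![x0, y0; y0, z0] : M2Z) ^ (2*j+1) := by
      intro x0 y0 z0 hdet hpos he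
      obtain ⟨e, he, hee⟩ := he
      refine ⟨x0, y0, z0, k, hk1, hdet, hpos, ?_⟩
      have gr := (rec_growth (x0+z0) (by linarith) (fun k => Matrix.trace ((!![x0, y0; y0, z0] : M2Z)^k))
        (by simp) (by simp [Matrix.trace_fin_two]) (tr_rec hdet) k).1
      rw [← hk, hee, Matrix.trace_smul, hGtr, smul_eq_mul] at gr
      have p0 : (0:ℤ) < 2^k := by positivity
      have : e = 1 := by
        rcases he with h | h
        · exact h
        · exfalso; rw [h] at gr; linarith
      rw [← hk, hee, this, one_smul, hG]
    have hsk : s^k = 1 ∨ s^k = -1 := by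
      rcases hs with h | h
      · left; rw [h, one_pow]
      · rw [h]; exact neg_one_pow_eq_or ℤ k
    rcases lt_or_gt_of_ne hne with hlt | hgt
    · apply fin (-x0) (-y0) (-z0) (by linarith) (by linarith)
      refine ⟨-s^k, by rcases hsk with h | h <;> rw [h] <;> simp, ?_⟩
      have : (!![-x0, -y0; -y0, -z0] : M2Z) = -F := by
        rw [eF]; ext i j; fin_cases i <;> fin_cases j <;> simp
      rw [this, Odd.neg_pow ⟨k, hk⟩, hpow, neg_smul]
    · apply fin x0 y0 z0 hdet hgt
      refine ⟨s^k, hsk, ?_⟩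
      rw [← eF, hpow]

theorem exists_cbrt (K : ℕ) (hK : 1 ≤ K) : ∃ m : ℕ, 1 ≤ m ∧ m^3 ≤ K ∧ K < (m+1)^3 := by
  have h1 : 1 ≤ Nat.findGreatest (fun m => m^3 ≤ K) K := Nat.le_findGreatest hK (by simpa using hK)
  refine ⟨_, h1, Nat.findGreatest_spec (P := fun m => m^3 ≤ K) hK (by simpa using hK), ?_⟩
  by_contra hc
  push Not at hc
  have : Nat.findGreatest (fun m => m^3 ≤ K) K + 1 ≤ Nat.findGreatest (fun m => m^3 ≤ K) K := by
    refine Nat.le_findGreatest ?_ hc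
    exact le_trans (Nat.le_self_pow (by norm_num) _) hc
  omega

noncomputable def gMat (p : (ℤ × ℤ) × (ℤ × ℤ)) : M2Z :=
  !![p.1.1 * p.2.1, p.1.2 * p.2.1 + 1; p.1.2 * p.2.1 + 1, p.1.2 * p.2.2]

theorem gMat_inj {p q : (ℤ × ℤ) × (ℤ × ℤ)} (hp : IsQuad p) (hq : IsQuad q) (h : gMat p = gMat q) : p = q := by
  obtain ⟨⟨α, β⟩, ⟨γ, δ⟩⟩ := p
  obtain ⟨⟨α', β'⟩, ⟨γ', δ'⟩⟩ := q
  have h00 : α * γ = α' * γ' := by simpa [gMat] using congrFun (congrFun h 0) 0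
  have h01 : β * γ = β' * γ' := by simpa [gMat] using congrFun (congrFun h 0) 1
  have h11 : β * δ = β' * δ' := by simpa [gMat] using congrFun (congrFun h 1) 1
  obtain ⟨a, b, c, d⟩ := quad_inj hp hq h00 h01 h11
  rw [a, b, c, d]

noncomputable def fImp (w : (ℕ × ℕ) × (Bool × ℕ)) : M2Z :=
  let y : ℤ := if w.2.1 then Int.sqrt ((w.1.1:ℤ) * w.1.2 + 1) else - Int.sqrt ((w.1.1:ℤ) * w.1.2 + 1)
  (!![(w.1.1 : ℤ), y; y, (w.1.2 : ℤ)] : M2Z) ^ (2 * w.2.2 + 1)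

open Classical in
theorem imp_card (K : ℕ) (hK : 1 ≤ K) :
    ((PAR K).filter (fun p => ¬ IsPrim (QuotientGroup.mk (sqP p)))).card ≤ 32 * K := by
  obtain ⟨m, hm1, hm2, hm3⟩ := exists_cbrt K hK
  have inj : Set.InjOn gMat ((PAR K).filter (fun p => ¬ IsPrim (QuotientGroup.mk (sqP p))) : Set _) := by
    intro p hp q hq h
    rw [Finset.mem_coe, Finset.mem_filter] at hp hq
    exact gMat_inj (PAR_quad hp.1).1 (PAR_quad hq.1).1 h
  rw [← Finset.card_image_of_injOn inj]
  have hsub : ((PAR K).filter (fun p => ¬ IsPrim (QuotientGroup.mk (sqP p)))).image gMat ⊆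
      ((Finset.range (m+1) ×ˢ Finset.range (m+1)) ×ˢ
        ((Finset.univ : Finset Bool) ×ˢ Finset.range (3*m+1))).image fImp := by
    intro M hM
    obtain ⟨p, hp, rfl⟩ := Finset.mem_image.1 hM
    obtain ⟨hp1, hp2⟩ := Finset.mem_filter.1 hp
    obtain ⟨hq, -, hle⟩ := PAR_quad hp1
    have hpos : 0 < p.1.1 * p.2.1 + p.1.2 * p.2.2 := ((mem_PAR K p).1 hp1).2.2.2.2.1
    obtain ⟨x0, y0, z0, j, hj, hd, ht, hG⟩ := imprim (sqP_det hq) hpos hp2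
    change gMat p = _ at hG
    have gr := rec_growth (x0+z0) (by linarith) (fun k => Matrix.trace ((!![x0, y0; y0, z0] : M2Z)^k))
        (by simp) (by simp [Matrix.trace_fin_two]) (tr_rec hd) j
    rw [← hG] at gr
    have htr : Matrix.trace (gMat p) = p.1.1 * p.2.1 + p.1.2 * p.2.2 := by
      unfold gMat; rw [Matrix.trace_fin_two_of]
    rw [htr] at gr
    obtain ⟨g1, -, g3⟩ := gr
    have g3 := (g3 hj).trans hle
    have g1 := g1.trans hle
    have hτ : x0 + z0 ≤ m := by
      by_contra hc
      have h1 : ((m:ℤ)+1) ≤ x0 + z0 := by omega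
      have h2 : ((m:ℤ)+1)^3 ≤ (x0+z0)^3 := pow_le_pow_left₀ (by positivity) h1 3
      have h3 : (K:ℤ) < ((m:ℤ)+1)^3 := by exact_mod_cast hm3
      linarith
    have hy0 : y0 ≠ 0 := by
      rintro rfl
      have h' : x0 * z0 = -1 := by linarith
      rcases Int.mul_eq_neg_one_iff_eq_one_or_neg_one.1 h' with ⟨h3, h4⟩ | ⟨h3, h4⟩ <;> omega
    have hxz : 0 ≤ x0 * z0 := by
      have : 1 ≤ y0^2 := by have := sq_pos_of_ne_zero hy0 ; omega
      linarith
    have hx0 : 0 ≤ x0 := by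
      by_contra hc; push Not at hc
      have : 0 < z0 := by linarith
      nlinarith
    have hz0 : 0 ≤ z0 := by
      by_contra hc; push Not at hc
      have : 0 < x0 := by linarith
      nlinarith
    have hjm : j < 3 * m + 1 := by
      have h1 : (2:ℕ)^j ≤ K := by exact_mod_cast g1
      have h2 : K < 2^(3*m) := by
        refine hm3.trans_le ?_
        have : m + 1 ≤ 2^m := Nat.lt_two_pow_self
        calc (m+1)^3 ≤ (2^m)^3 := Nat.pow_le_pow_left this 3
          _ = 2^(3*m) := by rw [← pow_mul, mul_comm]
      have := (Nat.pow_lt_pow_iff_right (by norm_num : 1 < 2)).1 (h1.trans_lt h2)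
      omega
    lift x0 to ℕ using hx0
    lift z0 to ℕ using hz0
    have hsq : Int.sqrt ((x0:ℤ) * z0 + 1) = |y0| := by
      have : (x0:ℤ) * z0 + 1 = y0 * y0 := by linarith
      rw [this, Int.sqrt_eq, Int.abs_eq_natAbs]
    rw [Finset.mem_image]
    refine ⟨((x0, z0), (decide (0 ≤ y0), j)), ?_, ?_⟩
    · simp only [Finset.mem_product, Finset.mem_range, Finset.mem_univ, true_and]
      omega
    · rw [hG]
      unfold fImp
      simp only [hsq]
      rcases le_total 0 y0 with h | h
      · simp [h, abs_of_nonneg h]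
      · have : ¬ (0 ≤ y0) := by omega
        simp [this, abs_of_nonpos h]
  refine (Finset.card_le_card hsub).trans (Finset.card_image_le.trans ?_)
  simp only [Finset.card_product, Finset.card_range, Finset.card_univ, Fintype.card_bool]
  have : (m+1)*(m+1)*(2*(3*m+1)) ≤ 32 * m^3 := by
    obtain ⟨k, rfl⟩ := Nat.exists_eq_add_of_le hm1
    ring_nf
    nlinarith [sq_nonneg k, Nat.zero_le (k^3)]
  linarith

theorem abs_trace_mk {A B : SL(2, ℤ)} (h : (QuotientGroup.mk A : PSL2Z) = QuotientGroup.mk B) :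
    |Matrix.trace A.1| = |Matrix.trace B.1| := by
  rcases (mk_eq_iff A B).1 h with h | h
  · rw [h]
  · rw [h, trace_SLneg, abs_neg]

theorem abs_trace_isConj {A B : SL(2, ℤ)} (h : IsConj (QuotientGroup.mk A : PSL2Z) (QuotientGroup.mk B)) :
    |Matrix.trace A.1| = |Matrix.trace B.1| := by
  obtain ⟨c, hc⟩ := isConj_iff.1 h
  obtain ⟨P, rfl⟩ := QuotientGroup.mk_surjective c
  rw [← QuotientGroup.mk_mul, ← QuotientGroup.mk_inv, ← QuotientGroup.mk_mul] at hc
  rw [← abs_trace_mk hc, trace_conj]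

theorem arcosh_le_iff (t s : ℝ) (ht : 0 < t) :
    2 * arcosh ((t^2+2)/2) ≤ s ↔ (t + Real.sqrt (t^2+4))/2 ≤ Real.exp (s/4) := by
  have h4 : 0 ≤ t^2+4 := by positivity
  have e1 : Real.sqrt (((t^2+2)/2)^2 - 1) = t * Real.sqrt (t^2+4) / 2 := by
    rw [show ((t^2+2)/2)^2 - 1 = (t/2)^2 * (t^2+4) by ring, Real.sqrt_mul (by positivity),
      Real.sqrt_sq (by positivity)]
    ring
  have hp : 0 < (t + Real.sqrt (t^2+4))/2 := by positivity
  have e2 : (t^2+2)/2 + t * Real.sqrt (t^2+4) / 2 = ((t + Real.sqrt (t^2+4))/2)^2 := by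
    have := Real.sq_sqrt h4
    linear_combination (-1/4) * this
  unfold arcosh
  rw [e1, e2, Real.log_pow, ← Real.log_le_iff_le_exp hp]
  push_cast
  constructor <;> intro h <;> linarith

theorem len_imp (t s : ℝ) (ht : 0 < t) (h : 2 * arcosh ((t^2+2)/2) ≤ s) : t ≤ Real.exp (s/4) := by
  rw [arcosh_le_iff t s ht] at h
  have : t ≤ Real.sqrt (t^2+4) := Real.le_sqrt_of_sq_le (by linarith)
  linarith

theorem len_of (t s : ℝ) (ht : 0 < t) (h : t + 1 ≤ Real.exp (s/4)) : 2 * arcosh ((t^2+2)/2) ≤ s := by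
  rw [arcosh_le_iff t s ht]
  have : Real.sqrt (t^2+4) ≤ t + 2 := by
    rw [Real.sqrt_le_left (by linarith)]; nlinarith
  linarith

def ARset (s : ℝ) : Set (ConjClasses PSL2Z) :=
  {C : ConjClasses PSL2Z | ∃ γ : PSL2Z, ConjClasses.mk γ = C ∧
      IsPrim γ ∧ IsHyp γ ∧ TransLenLE γ s ∧ IsConj γ γ⁻¹ ∧
      ∃ δ : PSL2Z, IsConj γ δ ∧ (AmbFst δ ∨ AmbSnd δ)}

noncomputable def clP (p : (ℤ × ℤ) × (ℤ × ℤ)) : ConjClasses PSL2Z :=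
  ConjClasses.mk (QuotientGroup.mk (sqP p))

theorem ARset_sub (s : ℝ) (K : ℕ) (hK : Real.exp (s/4) < K + 1) : ARset s ⊆ clP '' (PAR K : Set _) := by
  rintro C ⟨γ, rfl, hp, hh, ⟨A, hA, hl⟩, hr, ha⟩
  obtain ⟨x, y, z, h, ht, hc⟩ := lemU γ hp hh hr ha
  have htr : |Matrix.trace A.1| = (x+z)^2+2 := by
    rw [← hA] at hc
    rw [abs_trace_isConj hc, sqA_tr h, abs_of_nonneg (by positivity)]
  rw [htr] at hl
  push_cast at hl
  have ht' : (0:ℝ) < (x:ℝ) + z := by exact_mod_cast ht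
  have h1 := len_imp _ s ht' hl
  have h2 : x + z ≤ K := by
    have : (x:ℝ) + z < K + 1 := by linarith
    have : x + z < (K:ℤ) + 1 := by exact_mod_cast this
    omega
  obtain ⟨p, hp, hpc⟩ := exists_PAR h ht K h2
  exact ⟨p, hp, (ConjClasses.mk_eq_mk_iff_isConj.2 (hc.trans hpc)).symm⟩

open Classical in
theorem sub_ARset (s : ℝ) (K : ℕ) (hK : (K:ℝ) + 1 ≤ Real.exp (s/4)) :
    clP '' ((PAR K).filter (fun p => IsPrim (QuotientGroup.mk (sqP p))) : Set _) ⊆ ARset s := by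
  rintro C ⟨p, hp, rfl⟩
  rw [Finset.mem_coe, Finset.mem_filter] at hp
  obtain ⟨hp1, hp2⟩ := hp
  obtain ⟨hq, -, hle⟩ := PAR_quad hp1
  have hpos : 0 < p.1.1 * p.2.1 + p.1.2 * p.2.2 := ((mem_PAR K p).1 hp1).2.2.2.2.1
  refine ⟨QuotientGroup.mk (sqP p), rfl, hp2, sqP_hyp hq, ⟨sqP p, rfl, ?_⟩, sqA_rec (sqP_det hq), quad_amb hq⟩
  rw [sqP_tr hq, abs_of_nonneg (by positivity)]
  obtain ⟨t, ht⟩ : ∃ t, t = p.1.1 * p.2.1 + p.1.2 * p.2.2 := ⟨_, rfl⟩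
  rw [← ht] at hpos hle ⊢
  push_cast
  have h1 : (0:ℝ) < t := by exact_mod_cast hpos
  have h2 : (t:ℝ) ≤ K := by exact_mod_cast hle
  exact len_of _ s h1 (by linarith)

theorem N_upper (s : ℝ) (K : ℕ) (hK : Real.exp (s/4) < K + 1) : NAmbRec s ≤ (PAR K).card := by
  have h := ARset_sub s K hK
  calc NAmbRec s = (ARset s).ncard := rfl
    _ ≤ (clP '' (PAR K : Set _)).ncard := Set.ncard_le_ncard h ((Finset.finite_toSet _).image _)
    _ ≤ (PAR K : Set ((ℤ × ℤ) × (ℤ × ℤ))).ncard := Set.ncard_image_le (Finset.finite_toSet _)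
    _ = _ := Set.ncard_coe_finset _

open Classical in
theorem N_lower (s : ℝ) (K : ℕ) (hK1 : 1 ≤ K) (hK : (K:ℝ) + 1 ≤ Real.exp (s/4)) :
    (PAR K).card ≤ NAmbRec s + 32 * K := by
  have hfin : (ARset s).Finite := by
    obtain ⟨L, hL⟩ := exists_nat_gt (Real.exp (s/4))
    exact ((Finset.finite_toSet _).image _).subset (ARset_sub s L (by linarith))
  have h1 : ((PAR K).filter (fun p => IsPrim (QuotientGroup.mk (sqP p)))).card ≤ NAmbRec s := by
    have inj : Set.InjOn clP ((PAR K).filter (fun p => IsPrim (QuotientGroup.mk (sqP p))) : Set _) := by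
      intro p hp q hq h
      rw [Finset.mem_coe, Finset.mem_filter] at hp hq
      exact PAR_inj hp.1 hq.1 hp.2 (ConjClasses.mk_eq_mk_iff_isConj.1 h)
    calc _ = ((PAR K).filter (fun p => IsPrim (QuotientGroup.mk (sqP p))) : Set ((ℤ × ℤ) × (ℤ × ℤ))).ncard :=
          (Set.ncard_coe_finset _).symm
      _ = (clP '' ((PAR K).filter (fun p => IsPrim (QuotientGroup.mk (sqP p))) : Set _)).ncard :=
          (Set.ncard_image_of_injOn inj).symm
      _ ≤ (ARset s).ncard := Set.ncard_le_ncard (sub_ARset s K hK) hfin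
      _ = _ := rfl
  have h2 := imp_card K hK1
  have h3 := Finset.card_filter_add_card_filter_not (s := PAR K) (fun p => IsPrim (QuotientGroup.mk (sqP p)))
  omega

theorem final :
    (fun s : ℝ => (NAmbRec s : ℝ) - 3 / (8 * Real.pi) * s * Real.exp (s / 4))
      =O[Filter.atTop] fun s : ℝ => Real.exp (s / 4) := by
  obtain ⟨C, hC0, hC⟩ := PAR_asymp
  obtain ⟨c, hc⟩ : ∃ c, c = 3 / (2 * Real.pi) := ⟨_, rfl⟩
  have hc0 : 0 < c := by rw [hc]; positivity
  refine Asymptotics.IsBigO.of_bound (C + 32 + 4 * c) ?_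
  filter_upwards [Filter.eventually_ge_atTop (8:ℝ)] with s hs
  obtain ⟨E, hE⟩ : ∃ E, E = Real.exp (s/4) := ⟨_, rfl⟩
  have hE3 : 3 ≤ E := by
    have := Real.add_one_le_exp (s/4); rw [← hE] at this; linarith
  have hlE : Real.log E = s/4 := by rw [hE, Real.log_exp]
  have hsE : s/4 ≤ E := by
    have := Real.add_one_le_exp (s/4); rw [← hE] at this; linarith
  have hfl := Nat.floor_le (by linarith : 0 ≤ E)
  have hfl2 := Nat.lt_floor_add_one E
  obtain ⟨K, hK⟩ : ∃ K, K = ⌊E⌋₊ := ⟨_, rfl⟩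
  rw [← hK] at hfl hfl2
  have hK2 : 3 ≤ K := by rw [hK]; exact Nat.le_floor (by exact_mod_cast hE3)
  obtain ⟨L, rfl⟩ : ∃ L, K = L + 1 := ⟨K - 1, by omega⟩
  push_cast at hfl hfl2
  have hL1 : (2:ℝ) ≤ L := by exact_mod_cast (by omega : 2 ≤ L)
  have up := N_upper s (L+1) (by rw [← hE]; push_cast; linarith)
  have lo := N_lower s L (by omega) (by rw [← hE]; linarith)
  have up : (NAmbRec s : ℝ) ≤ (PAR (L+1)).card := by exact_mod_cast up
  have lo : ((PAR L).card : ℝ) ≤ NAmbRec s + 32 * L := by exact_mod_cast lo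
  have b1 := (abs_le.1 (hC (L+1) (by omega))).2
  have b2 := (abs_le.1 (hC L (by omega))).1
  rw [← hc] at b1 b2
  push_cast at b1
  have main : 3 / (8 * Real.pi) * s = c * (s/4) := by rw [hc]; field_simp; ring
  rw [Real.norm_eq_abs, Real.norm_eq_abs, ← hE, abs_of_pos (by linarith : 0 < E), main, ← hlE]
  have l1 : Real.log ((L:ℝ)+1) ≤ Real.log E := Real.log_le_log (by linarith) hfl
  have l0 : 0 ≤ Real.log ((L:ℝ)+1) := Real.log_nonneg (by linarith)
  have u1 : ((L:ℝ)+1) * Real.log ((L:ℝ)+1) ≤ E * Real.log E := mul_le_mul hfl l1 l0 (by linarith)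
  have l2 : E * Real.log E - 4 * E ≤ L * Real.log L := by
    have hlog : Real.log (E / L) ≤ E / L - 1 := Real.log_le_sub_one_of_pos (by positivity)
    rw [Real.log_div (by linarith) (by linarith)] at hlog
    have h5 : (L:ℝ) * (E / L - 1) = E - L := by field_simp
    have h6 : (L:ℝ) * (Real.log E - Real.log L) ≤ E - L := by
      rw [← h5]; exact mul_le_mul_of_nonneg_left hlog (by linarith)
    have h7 : (E - L) * Real.log E ≤ 2 * E := by
      apply mul_le_mul <;> linarith
    linarith
  have u2 := mul_le_mul_of_nonneg_left u1 hc0.le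
  have l3 := mul_le_mul_of_nonneg_left l2 hc0.le
  have C1 := mul_le_mul_of_nonneg_left hfl hC0
  have C2 : C * (L:ℝ) ≤ C * E := mul_le_mul_of_nonneg_left (by linarith) hC0
  have cE : 0 ≤ c * E := by positivity
  rw [abs_le]
  constructor <;> linarith

/-- Theorem 14, second claim: as `s → +∞`,
`𝒩_{AR}(s) = (3/(8π)) s e^{s/4} + O(e^{s/4})`. -/
theorem ambiguous_reciprocal_classes_asymptotic :
    (fun s : ℝ => (NAmbRec s : ℝ) - 3 / (8 * Real.pi) * s * Real.exp (s / 4))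
      =O[Filter.atTop] fun s : ℝ => Real.exp (s / 4) := by
  exact final
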